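/- arXiv:1307.1567 — 18 statements merged into one kernel-verified Lean document; each statement's English description precedes it below -/
import Mathlib

section
/- Let S be a skew lattice. The operation ∧ is rectangular, i.e. x∧y∧z = x∧z for all x,y,z ∈ S, if and only if the operation ∨ is rectangular, i.e. x∨y∨z = x∨z for all x,y,z ∈ S. -/
/-- If `m` is a rectangular band and `j` absorbs into it, then `j` is the opposite of `m`
and hence rectangular as well. -/
theorem rectangular_transfer {S : Type*} (m j : S → S → S)
    (m_idem : ∀ x : S, m x x = x)
    (m_assoc : ∀ x y z : S, m (m x y) z = m x (m y z))
    (a₁ : ∀ x y : S, m x (j x y) = x)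
    (a₂ : ∀ x y : S, m (j y x) x = x)
    (h : ∀ x y z : S, m (m x y) z = m x z) (x y z : S) :
    j (j x y) z = j x z := by
  have key : ∀ x y : S, j x y = m y x := by
    intro x y
    calc j x y = m (j x y) (j x y) := (m_idem _).symm
      _ = m (m (j x y) x) (j x y) := (h _ _ _).symm
      _ = m (j x y) (m x (j x y)) := m_assoc _ _ _
      _ = m (m (j x y) y) (m x (j x y)) := (h _ _ _).symm
      _ = m y x := by rw [a₂ y x, a₁ x y]
  rw [key, key x y, key x z, ← m_assoc, h]

/-- In a skew lattice, ∧ is rectangular iff ∨ is rectangular. -/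
theorem wedge_rectangular_iff_vee_rectangular {S : Type*} (wedge vee : S → S → S)
    (wedge_idem : ∀ x : S, wedge x x = x)
    (vee_idem : ∀ x : S, vee x x = x)
    (wedge_assoc : ∀ x y z : S, wedge (wedge x y) z = wedge x (wedge y z))
    (vee_assoc : ∀ x y z : S, vee (vee x y) z = vee x (vee y z))
    (abs₁ : ∀ x y : S, wedge x (vee x y) = x)
    (abs₂ : ∀ x y : S, wedge (vee y x) x = x)
    (abs₃ : ∀ x y : S, vee x (wedge x y) = x)
    (abs₄ : ∀ x y : S, vee (wedge y x) x = x) :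
    (∀ x y z : S, wedge (wedge x y) z = wedge x z) ↔
      (∀ x y z : S, vee (vee x y) z = vee x z) := by
  exact ⟨rectangular_transfer wedge vee wedge_idem wedge_assoc abs₁ abs₂,
    rectangular_transfer vee wedge vee_idem vee_assoc abs₃ abs₄⟩
end

section
/- Let S be a skew lattice. The operation ∧ satisfies x∧y∧z = x∧z for all x,y,z ∈ S if and only if the identity x∧y = y∨x holds for all x,y ∈ S. -/
/-- In a skew lattice, ∧ is rectangular iff x∧y = y∨x holds. -/
theorem wedge_rectangular_iff_wedge_eq_vee_swap {S : Type*} (wedge vee : S → S → S)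
    (wedge_idem : ∀ x : S, wedge x x = x)
    (vee_idem : ∀ x : S, vee x x = x)
    (wedge_assoc : ∀ x y z : S, wedge (wedge x y) z = wedge x (wedge y z))
    (vee_assoc : ∀ x y z : S, vee (vee x y) z = vee x (vee y z))
    (abs₁ : ∀ x y : S, wedge x (vee x y) = x)
    (abs₂ : ∀ x y : S, wedge (vee y x) x = x)
    (abs₃ : ∀ x y : S, vee x (wedge x y) = x)
    (abs₄ : ∀ x y : S, vee (wedge y x) x = x) :
    (∀ x y z : S, wedge (wedge x y) z = wedge x z) ↔
      (∀ x y : S, wedge x y = vee y x) := by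
  constructor
  · intro h x y
    have e1 : wedge y (vee y x) = y := abs₁ y x
    have e2 : wedge (vee y x) x = x := abs₂ x y
    have e3 : wedge x (vee y x) = vee y x := by
      calc wedge x (vee y x) = wedge (wedge (vee y x) x) (vee y x) := by rw [e2]
        _ = vee y x := by rw [h, wedge_idem]
    calc wedge x y = wedge x (wedge y (vee y x)) := by rw [e1]
      _ = vee y x := by rw [← wedge_assoc, h, e3]
  · intro h
    have k : ∀ a b : S, wedge a (wedge b a) = a := fun a b => by
      rw [h b a]; exact abs₁ a b
    intro x y z
    calc wedge (wedge x y) z = wedge (wedge x y) (wedge z (wedge x z)) := by rw [k z x]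
      _ = wedge (wedge x (wedge (wedge y z) x)) z := by simp only [wedge_assoc]
      _ = wedge x z := by rw [k]
end

section
/- Let S be a skew lattice and let x, y ∈ S with x D y. Then x∨y = y∧x and x∧y = y∨x. -/
/-- If x D y in a skew lattice then x∨y = y∧x and x∧y = y∨x. -/
theorem dRel_vee_eq_wedge_swap {S : Type*} (wedge vee : S → S → S)
    (wedge_idem : ∀ x : S, wedge x x = x)
    (vee_idem : ∀ x : S, vee x x = x)
    (wedge_assoc : ∀ x y z : S, wedge (wedge x y) z = wedge x (wedge y z))
    (vee_assoc : ∀ x y z : S, vee (vee x y) z = vee x (vee y z))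
    (abs₁ : ∀ x y : S, wedge x (vee x y) = x)
    (abs₂ : ∀ x y : S, wedge (vee y x) x = x)
    (abs₃ : ∀ x y : S, vee x (wedge x y) = x)
    (abs₄ : ∀ x y : S, vee (wedge y x) x = x)
    (x y : S)
    (hD : wedge (wedge x y) x = x ∧ wedge (wedge y x) y = y) :
    vee x y = wedge y x ∧ wedge x y = vee y x := by
  have key : ∀ x y : S, wedge (wedge x y) x = x → wedge (wedge y x) y = y →
      vee x y = wedge y x := by
    intro x y hx hy
    have h1 : vee (wedge y x) y = wedge y x := by
      have := abs₃ (wedge y x) y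
      rwa [hy] at this
    have h2 : vee x (wedge y x) = wedge y x := by
      have := abs₄ (wedge y x) x
      rwa [← wedge_assoc, hx] at this
    have h3 : vee (wedge y x) x = x := abs₄ x y
    have h4 : vee y (wedge y x) = y := abs₃ y x
    have h5 : vee (wedge y x) (vee y x) = x := by
      rw [← vee_assoc, h1, h3]
    have h6 : vee x (vee y x) = x := by
      calc vee x (vee y x) = vee (vee (wedge y x) (vee y x)) (vee y x) := by rw [h5]
        _ = x := by rw [vee_assoc, vee_idem, h5]
    calc vee x y = vee x (vee y (vee x (wedge y x))) := by rw [h2, h4]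
      _ = vee (vee x (vee y x)) (wedge y x) := by simp only [vee_assoc]
      _ = wedge y x := by rw [h6, h2]
  exact ⟨key x y hD.1 hD.2, (key y x hD.2 hD.1).symm⟩
end

section
/- In any skew lattice S, both band reducts are regular: for all x, y, z ∈ S, x∧y∧x∧z∧x = x∧y∧z∧x and x∨y∨x∨z∨x = x∨y∨z∨x. -/
/-- Regularity of the first operation; the second follows by duality. -/
theorem skew_regular_aux {S : Type*} (m j : S → S → S)
    (mi : ∀ x : S, m x x = x)
    (ma : ∀ x y z : S, m (m x y) z = m x (m y z))
    (ja : ∀ x y z : S, j (j x y) z = j x (j y z))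
    (ji : ∀ x : S, j x x = x)
    (abs₁ : ∀ x y : S, m x (j x y) = x)
    (abs₂ : ∀ x y : S, m (j y x) x = x)
    (abs₃ : ∀ x y : S, j x (m x y) = x)
    (abs₄ : ∀ x y : S, j (m y x) x = x) (x y z : S) :
    m (m (m (m x y) x) z) x = m (m (m x y) z) x := by
  obtain ⟨a, ha⟩ : ∃ a, a = j (m x y) x := ⟨_, rfl⟩
  obtain ⟨b, hb⟩ : ∃ b, b = j x (m z x) := ⟨_, rfl⟩
  have qa : m (m x y) a = m x y := by rw [ha, abs₁]
  have br : m b (m z x) = m z x := by rw [hb, abs₂]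
  have ax : m a x = x := by rw [ha, abs₂]
  have xb : m x b = x := by rw [hb, abs₁]
  have jxa : j x a = x := by rw [ha, ← ja, abs₃, ji]
  have jbx : j b x = x := by rw [hb, ja, abs₄, ji]
  have xa : m x a = a := by
    have h := abs₂ a x
    rwa [jxa] at h
  have bx : m b x = b := by
    have h := abs₁ b x
    rwa [jbx] at h
  have hw : m a b = x := by
    have h1 : m x (m (m b a) x) = x := by
      rw [ma, ax, ← ma, xb, mi]
    have h2 : m x (m (m (m b a) (m b a)) x) = m a b := by
      calc m x (m (m (m b a) (m b a)) x)
          = m (m x b) (m (m a b) (m a x)) := by simp only [ma]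
        _ = m a b := by
          rw [xb, ax, ma, bx, ← ma, xa]
    rw [mi, h1] at h2
    exact h2.symm
  calc m (m (m (m x y) x) z) x = m (m x y) (m x (m z x)) := by simp only [ma]
    _ = m (m (m x y) a) (m b (m z x)) := by
      rw [ma (m x y) a, ← ma a b, hw]
    _ = m (m (m x y) z) x := by rw [qa, br]; simp only [ma]

/-- Both band reducts of a skew lattice are regular. -/
theorem skewLattice_regular {S : Type*} (wedge vee : S → S → S)
    (wedge_idem : ∀ x : S, wedge x x = x)
    (vee_idem : ∀ x : S, vee x x = x)
    (wedge_assoc : ∀ x y z : S, wedge (wedge x y) z = wedge x (wedge y z))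
    (vee_assoc : ∀ x y z : S, vee (vee x y) z = vee x (vee y z))
    (abs₁ : ∀ x y : S, wedge x (vee x y) = x)
    (abs₂ : ∀ x y : S, wedge (vee y x) x = x)
    (abs₃ : ∀ x y : S, vee x (wedge x y) = x)
    (abs₄ : ∀ x y : S, vee (wedge y x) x = x) :
    ∀ x y z : S,
      wedge (wedge (wedge (wedge x y) x) z) x = wedge (wedge (wedge x y) z) x ∧
      vee (vee (vee (vee x y) x) z) x = vee (vee (vee x y) z) x := by
  intro x y z
  exact ⟨skew_regular_aux wedge vee wedge_idem wedge_assoc vee_assoc vee_idem abs₁ abs₂ abs₃ abs₄ x y z,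
    skew_regular_aux vee wedge vee_idem vee_assoc wedge_assoc wedge_idem abs₃ abs₄ abs₁ abs₂ x y z⟩
end

section
/- Let S be a skew lattice and let A, B ⊆ S be subsets each of which is contained in a single D-class (any two elements of A are D-related, and any two elements of B are D-related). Let φ : S → S be a map with φ(A) ⊆ B. Then φ(x∧y) = φ(x)∧φ(y) for all x, y ∈ A if and only if φ(x∨y) = φ(x)∨φ(y) for all x, y ∈ A. -/
/-- A map between subsets of single D-classes is a ∧-homomorphism iff it is a
∨-homomorphism. -/
theorem wedge_hom_iff_vee_hom {S : Type*} (wedge vee : S → S → S)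
    (wedge_idem : ∀ x : S, wedge x x = x)
    (vee_idem : ∀ x : S, vee x x = x)
    (wedge_assoc : ∀ x y z : S, wedge (wedge x y) z = wedge x (wedge y z))
    (vee_assoc : ∀ x y z : S, vee (vee x y) z = vee x (vee y z))
    (abs₁ : ∀ x y : S, wedge x (vee x y) = x)
    (abs₂ : ∀ x y : S, wedge (vee y x) x = x)
    (abs₃ : ∀ x y : S, vee x (wedge x y) = x)
    (abs₄ : ∀ x y : S, vee (wedge y x) x = x)
    (A B : Set S)
    (hA : ∀ x ∈ A, ∀ y ∈ A, wedge (wedge x y) x = x ∧ wedge (wedge y x) y = y)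
    (hB : ∀ x ∈ B, ∀ y ∈ B, wedge (wedge x y) x = x ∧ wedge (wedge y x) y = y)
    (φ : S → S) (hφ : ∀ x ∈ A, φ x ∈ B) :
    (∀ x ∈ A, ∀ y ∈ A, φ (wedge x y) = wedge (φ x) (φ y)) ↔
      (∀ x ∈ A, ∀ y ∈ A, φ (vee x y) = vee (φ x) (φ y)) := by
  have key : ∀ x y : S, wedge (wedge x y) x = x → wedge (wedge y x) y = y →
      vee x y = wedge y x := by
    intro x y hx hy
    have h1 : vee x (wedge y x) = wedge y x := by
      have h := abs₄ (wedge y x) x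
      rwa [← wedge_assoc, hx] at h
    have h2 : vee y (wedge y x) = y := abs₃ y x
    -- the join-version of the D relation
    have h3 : ∀ a b : S, wedge (wedge a b) a = a → vee (vee b a) b = b := by
      intro a b hab
      have k1 : vee a (wedge b a) = wedge b a := by
        have h := abs₄ (wedge b a) a
        rwa [← wedge_assoc, hab] at h
      have k2 : vee (vee b a) (wedge b a) = b := by rw [vee_assoc, k1, abs₃]
      have k3 : wedge (vee b a) b = vee b a := by
        have h := abs₁ (vee b a) (wedge b a)
        rwa [k2] at h
      have h := abs₄ b (vee b a)
      rwa [k3] at h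
    have h4 : vee (vee x y) x = x := h3 y x hy
    calc vee x y = vee x (vee y (wedge y x)) := by rw [h2]
      _ = vee x (vee y (vee x (wedge y x))) := by rw [h1]
      _ = vee (vee (vee x y) x) (wedge y x) := by simp only [vee_assoc]
      _ = wedge y x := by rw [h4, h1]
  have kA : ∀ x ∈ A, ∀ y ∈ A, vee x y = wedge y x := fun x hx y hy =>
    key x y (hA x hx y hy).1 (hA x hx y hy).2
  have kB : ∀ x ∈ A, ∀ y ∈ A, vee (φ x) (φ y) = wedge (φ y) (φ x) := fun x hx y hy =>
    key _ _ (hB _ (hφ x hx) _ (hφ y hy)).1 (hB _ (hφ x hx) _ (hφ y hy)).2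
  constructor
  · intro h x hx y hy
    rw [kA x hx y hy, kB x hx y hy, h y hy x hx]
  · intro h x hx y hy
    rw [← kA y hy x hx, ← kB y hy x hx, h y hy x hx]
end

section
/- Let S be a skew lattice, let a, a', a'', a''' ∈ S be pairwise D-related, and let b ∈ S satisfy b∧a∧b = b (i.e., a ⪰ b in the natural preorder). Then (a∧b∧a')∧(a''∧b∧a''') = a∧b∧a'''. In particular, cosets of an upper D-class in a lower one are closed under ∧. -/
/-- Cosets of an upper D-class in a lower one are closed under ∧:
(a∧b∧a')∧(a''∧b∧a''') = a∧b∧a'''. -/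
theorem coset_wedge_closed {S : Type*} (wedge vee : S → S → S)
    (wedge_idem : ∀ x : S, wedge x x = x)
    (vee_idem : ∀ x : S, vee x x = x)
    (wedge_assoc : ∀ x y z : S, wedge (wedge x y) z = wedge x (wedge y z))
    (vee_assoc : ∀ x y z : S, vee (vee x y) z = vee x (vee y z))
    (abs₁ : ∀ x y : S, wedge x (vee x y) = x)
    (abs₂ : ∀ x y : S, wedge (vee y x) x = x)
    (abs₃ : ∀ x y : S, vee x (wedge x y) = x)
    (abs₄ : ∀ x y : S, vee (wedge y x) x = x)
    (a a' a'' a''' b : S)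
    (hD₁ : wedge (wedge a a') a = a ∧ wedge (wedge a' a) a' = a')
    (hD₂ : wedge (wedge a a'') a = a ∧ wedge (wedge a'' a) a'' = a'')
    (hD₃ : wedge (wedge a a''') a = a ∧ wedge (wedge a''' a) a''' = a''')
    (hD₄ : wedge (wedge a' a'') a' = a' ∧ wedge (wedge a'' a') a'' = a'')
    (hD₅ : wedge (wedge a' a''') a' = a' ∧ wedge (wedge a''' a') a''' = a''')
    (hD₆ : wedge (wedge a'' a''') a'' = a'' ∧ wedge (wedge a''' a'') a''' = a''')
    (hb : wedge (wedge b a) b = b) :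
    wedge (wedge (wedge a b) a') (wedge (wedge a'' b) a''') = wedge (wedge a b) a''' := by
  have key : ∀ s y t : S, ∀ c : S, c = wedge s (wedge y t) → wedge c (wedge y c) = c := by
    intro s y t c hc
    have h1 : wedge c (wedge (wedge s y) c) = c := by
      have e : c = wedge (wedge s y) t := by rw [hc, wedge_assoc]
      have h2 : wedge (wedge s y) c = c := by
        rw [e, ← wedge_assoc, wedge_idem]
      rw [h2, wedge_idem]
    have h3 : wedge (wedge c s) (wedge y c) = c := by
      simpa only [wedge_assoc] using h1
    have h4 : wedge c (wedge y c) = c := by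
      have h5 : wedge c (wedge y c) = wedge (wedge (wedge c s) (wedge y c)) (wedge y c) := by
        rw [h3]
      rw [h5, wedge_assoc, wedge_idem, h3]
    exact h4
  have hb' : wedge b (wedge a' b) = b := by
    apply key (wedge b a) a' (wedge a b) b
    calc b = wedge (wedge b (wedge (wedge a a') a)) b := by rw [hD₁.1, hb]
      _ = _ := by simp only [wedge_assoc]
  have hb'' : wedge b (wedge (wedge a' a'') b) = b := by
    apply key b (wedge a' a'') (wedge a' b) b
    calc b = wedge b (wedge (wedge (wedge a' a'') a') b) := by rw [hD₄.1, hb']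
      _ = _ := by simp only [wedge_assoc]
  calc _ = wedge (wedge a (wedge b (wedge (wedge a' a'') b))) a''' := by
        simp only [wedge_assoc]
    _ = _ := by rw [hb'']
end

section
/- In any skew lattice S, for all a, b, b' ∈ S one has (a∧b∧a)∧(a∧b'∧a) = a∧b∧b'∧a. In particular, every image set {a∧b∧a : b ∈ B} is closed under ∧. -/
/-- Image sets are closed under ∧: (a∧b∧a)∧(a∧b'∧a) = a∧b∧b'∧a. -/
theorem imageSet_wedge_closed {S : Type*} (wedge vee : S → S → S)
    (wedge_idem : ∀ x : S, wedge x x = x)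
    (vee_idem : ∀ x : S, vee x x = x)
    (wedge_assoc : ∀ x y z : S, wedge (wedge x y) z = wedge x (wedge y z))
    (vee_assoc : ∀ x y z : S, vee (vee x y) z = vee x (vee y z))
    (abs₁ : ∀ x y : S, wedge x (vee x y) = x)
    (abs₂ : ∀ x y : S, wedge (vee y x) x = x)
    (abs₃ : ∀ x y : S, vee x (wedge x y) = x)
    (abs₄ : ∀ x y : S, vee (wedge y x) x = x) :
    ∀ a b b' : S,
      wedge (wedge (wedge a b) a) (wedge (wedge a b') a) = wedge (wedge (wedge a b) b') a := by
  intro a b c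
  -- `e ∈ R_a` absorbs `a ∧ b` on the left, `f ∈ L_a` absorbs `c ∧ a` on the right
  obtain ⟨e, he⟩ : ∃ e, e = vee (wedge a b) a := ⟨_, rfl⟩
  obtain ⟨f, hf⟩ : ∃ f, f = vee a (wedge c a) := ⟨_, rfl⟩
  have xe : wedge (wedge a b) e = wedge a b := by rw [he, abs₁]
  have fy : wedge f (wedge c a) = wedge c a := by rw [hf, abs₂]
  have ea : wedge e a = a := by rw [he, abs₂]
  have af : wedge a f = a := by rw [hf, abs₁]
  have ae : wedge a e = e := by
    have h : vee a e = a := by rw [he, ← vee_assoc, abs₃, vee_idem]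
    have h2 := abs₂ e a
    rwa [h] at h2
  have fa : wedge f a = f := by
    have h : vee f a = a := by rw [hf, vee_assoc, abs₄, vee_idem]
    have h2 := abs₁ f a
    rwa [h] at h2
  -- Clifford-style: `e ∧ f = a`
  have h1 : wedge a (wedge f e) = e := by rw [← wedge_assoc, af, ae]
  have h2 : wedge e (wedge f e) = e := by
    calc wedge e (wedge f e) = wedge (wedge a (wedge f e)) (wedge f e) := by rw [h1]
      _ = e := by rw [wedge_assoc, wedge_idem, h1]
  have ef : wedge e f = a := by
    calc wedge e f = wedge e (wedge f (wedge e a)) := by rw [ea, fa]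
      _ = wedge (wedge e (wedge f e)) a := by simp only [wedge_assoc]
      _ = a := by rw [h2, ea]
  calc wedge (wedge (wedge a b) a) (wedge (wedge a c) a)
      = wedge (wedge a b) (wedge (wedge a a) (wedge c a)) := by simp only [wedge_assoc]
    _ = wedge (wedge a b) (wedge (wedge e f) (wedge c a)) := by rw [wedge_idem, ef]
    _ = wedge (wedge (wedge a b) e) (wedge f (wedge c a)) := by simp only [wedge_assoc]
    _ = wedge (wedge (wedge a b) c) a := by rw [xe, fy, wedge_assoc (wedge a b)]
end

section
/- Let S be a skew lattice, let x, y ∈ S with x D y, and let b ∈ S satisfy b∧x∧b = b and b∧y∧b = b. Then (x∧b∧x)∧(y∧b∧y) = (x∧y)∧b∧(x∧y); that is, the coset map z ↦ z∧b∧z is a ∧-homomorphism on the D-class of x. -/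
/-- If `x D y` and `b` lies below the class of `x`, then `x ∧ y ∧ b = x ∧ b`. -/
theorem coset_aux {S : Type*} (w v : S → S → S)
    (wi : ∀ x : S, w x x = x)
    (vi : ∀ x : S, v x x = x)
    (wa : ∀ x y z : S, w (w x y) z = w x (w y z))
    (va : ∀ x y z : S, v (v x y) z = v x (v y z))
    (abs₁ : ∀ x y : S, w x (v x y) = x)
    (abs₂ : ∀ x y : S, w (v y x) x = x)
    (abs₃ : ∀ x y : S, v x (w x y) = x)
    (abs₄ : ∀ x y : S, v (w y x) x = x)
    (x y b : S)
    (hx : w x (w y x) = x)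
    (hb : w b (w x b) = b) : w x (w y b) = w x b := by
  have h1 : v b (w x b) = w x b := by
    have h := abs₄ (w x b) b
    rwa [hb] at h
  have h2 : v (v x b) (w x b) = x := by rw [va, h1, abs₃]
  have h3 : v (v x b) x = x := by
    calc v (v x b) x = v (v x b) (v (v x b) (w x b)) := by rw [h2]
      _ = v (v x b) (w x b) := by rw [← va, vi]
      _ = x := h2
  have h4 : w (v x b) x = v x b := by
    have h := abs₁ (v x b) x
    rwa [h3] at h
  have h5 : w x (v x b) = x := abs₁ x b
  have h6 : w (v x b) b = b := abs₂ b x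
  generalize v x b = a at *
  have h7 : w a (w y x) = a := by
    calc w a (w y x) = w (w a x) (w y x) := by rw [h4]
      _ = a := by rw [wa, hx, h4]
  have h8 : w x (w y a) = x := by
    calc w x (w y a) = w (w x a) (w y (w a (w y x))) := by rw [h7, h5]
      _ = w x (w (w (w a y) (w a y)) x) := by simp only [wa]
      _ = w x (w a (w y x)) := by rw [wi, wa]
      _ = x := by rw [h7, h5]
  calc w x (w y b) = w x (w y (w a b)) := by rw [h6]
    _ = w (w x (w y a)) b := by simp only [wa]
    _ = w x b := by rw [h8]

/-- The coset map z ↦ z∧b∧z is a ∧-homomorphism on a D-class. -/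
theorem coset_map_wedge_hom {S : Type*} (wedge vee : S → S → S)
    (wedge_idem : ∀ x : S, wedge x x = x)
    (vee_idem : ∀ x : S, vee x x = x)
    (wedge_assoc : ∀ x y z : S, wedge (wedge x y) z = wedge x (wedge y z))
    (vee_assoc : ∀ x y z : S, vee (vee x y) z = vee x (vee y z))
    (abs₁ : ∀ x y : S, wedge x (vee x y) = x)
    (abs₂ : ∀ x y : S, wedge (vee y x) x = x)
    (abs₃ : ∀ x y : S, vee x (wedge x y) = x)
    (abs₄ : ∀ x y : S, vee (wedge y x) x = x)
    (x y b : S)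
    (hD : wedge (wedge x y) x = x ∧ wedge (wedge y x) y = y)
    (hbx : wedge (wedge b x) b = b)
    (hby : wedge (wedge b y) b = b) :
    wedge (wedge (wedge x b) x) (wedge (wedge y b) y) =
      wedge (wedge (wedge x y) b) (wedge x y) := by
  obtain ⟨hx, hy⟩ := hD
  rw [wedge_assoc] at hbx hby
  have e1 : wedge x (wedge y b) = wedge x b :=
    coset_aux wedge vee wedge_idem vee_idem wedge_assoc vee_assoc abs₁ abs₂ abs₃ abs₄ x y b
      (by rw [← wedge_assoc, hx]) hbx
  have e2 : wedge (wedge b x) y = wedge b y :=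
    coset_aux (fun p q => wedge q p) (fun p q => vee q p) wedge_idem vee_idem
      (fun p q r => (wedge_assoc r q p).symm) (fun p q r => (vee_assoc r q p).symm)
      abs₂ abs₁ abs₄ abs₃ y x b hy (by rw [wedge_assoc, hby])
  calc wedge (wedge (wedge x b) x) (wedge (wedge y b) y)
      = wedge x (wedge (wedge (wedge b x) y) (wedge b y)) := by simp only [wedge_assoc]
    _ = wedge x (wedge b y) := by rw [e2, wedge_idem]
    _ = wedge x (wedge (wedge b x) y) := by rw [e2]
    _ = wedge (wedge x b) (wedge x y) := by simp only [wedge_assoc]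
    _ = wedge (wedge (wedge x y) b) (wedge x y) := by rw [wedge_assoc x y b, e1]
end

section
/- Let S be a skew lattice and let b, x, y, z, w ∈ S satisfy b∧x∧b = b∧y∧b and b∧z∧b = b∧w∧b. Then b∧(x∧z)∧b = b∧(y∧w)∧b. -/
/-- If `x`, `y` are R-related and `b ∧ x = b`, then `x ∧ b = y ∧ b`. -/
theorem skew_aux {S : Type*} (m v : S → S → S)
    (idem : ∀ x : S, m x x = x)
    (assoc : ∀ x y z : S, m (m x y) z = m x (m y z))
    (videm : ∀ x : S, v x x = x)
    (vassoc : ∀ x y z : S, v (v x y) z = v x (v y z))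
    (abs₁ : ∀ x y : S, m x (v x y) = x)
    (abs₂ : ∀ x y : S, m (v y x) x = x)
    (abs₄ : ∀ x y : S, v (m y x) x = x)
    (b x y : S) (h1 : m x y = y) (h2 : m y x = x) (hb : m b x = b) :
    m x b = m y b := by
  have e1 : v b x = x := by have := abs₄ x b; rwa [hb] at this
  have e2 : m x (v x b) = x := abs₁ x b
  have e3 : m (v x b) b = b := abs₂ b x
  have e4 : v (v x b) x = x := by rw [vassoc, e1, videm]
  have e5 : m (v x b) x = v x b := by
    have := abs₁ (v x b) x; rwa [e4] at this
  generalize v x b = n at *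
  -- `x = x n y x = x (n y) (n y) x = y n`
  have e6 : m x (m n (m y x)) = x := by rw [h2, e5, e2]
  have e7 : m y n = x := by
    have k : m (m n y) (m n y) = m n y := idem _
    calc m y n = m x (m (m (m n y) (m n y)) x) := by
          simp only [assoc]
          rw [h2, e5, ← assoc, e2, ← assoc, h1]
      _ = x := by rw [k, assoc, e6]
  rw [← e7, assoc, e3]

/-- The R-relation is a right congruence. -/
theorem skew_R {S : Type*} (m v : S → S → S)
    (idem : ∀ x : S, m x x = x)
    (assoc : ∀ x y z : S, m (m x y) z = m x (m y z))
    (videm : ∀ x : S, v x x = x)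
    (vassoc : ∀ x y z : S, v (v x y) z = v x (v y z))
    (abs₁ : ∀ x y : S, m x (v x y) = x)
    (abs₂ : ∀ x y : S, m (v y x) x = x)
    (abs₄ : ∀ x y : S, v (m y x) x = x)
    (c x y : S) (h1 : m x y = y) (h2 : m y x = x) :
    m (m y c) (m x c) = m x c := by
  have h := skew_aux m v idem assoc videm vassoc abs₁ abs₂ abs₄ (m c x) x y h1 h2
    (by rw [assoc, idem])
  calc m (m y c) (m x c) = m (m y (m c x)) c := by simp only [assoc]
    _ = m (m x c) (m x c) := by rw [← h]; simp only [assoc]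
    _ = m x c := idem _

theorem skew_K {S : Type*} (m v : S → S → S)
    (idem : ∀ x : S, m x x = x)
    (assoc : ∀ x y z : S, m (m x y) z = m x (m y z))
    (videm : ∀ x : S, v x x = x)
    (vassoc : ∀ x y z : S, v (v x y) z = v x (v y z))
    (abs₁ : ∀ x y : S, m x (v x y) = x)
    (abs₂ : ∀ x y : S, m (v y x) x = x)
    (abs₄ : ∀ x y : S, v (m y x) x = x)
    (a x y : S) :
    m (m a (m x (m a (m y a)))) (m a (m x (m y a))) = m a (m x (m y a)) ∧
    m (m a (m x (m y a))) (m a (m x (m a (m y a)))) = m a (m x (m a (m y a))) := by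
  have aa : ∀ t, m a (m a t) = m a t := fun t => by rw [← assoc, idem]
  have ax : m a (m x (m a x)) = m a x := by
    have := idem (m a x); rwa [assoc] at this
  have h1 : m (m a x) (m a (m x a)) = m a (m x a) := by
    have := idem (m a x)
    calc _ = m (m (m a x) (m a x)) a := by simp only [assoc]
      _ = _ := by rw [this, assoc]
  have h2 : m (m a (m x a)) (m a x) = m a x := by
    simp only [assoc, aa]; exact ax
  have k1 := skew_R m v idem assoc videm vassoc abs₁ abs₂ abs₄ y _ _ h1 h2
  have k2 := skew_R m v idem assoc videm vassoc abs₁ abs₂ abs₄ y _ _ h2 h1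
  have k1' := congrArg (fun t => m t a) k1
  have k2' := congrArg (fun t => m t a) k2
  simp only [assoc] at k1' k2' ⊢
  simp only [aa]
  exact ⟨k1', k2'⟩


/-- The coset equivalence is compatible with ∧. -/
theorem coset_equiv_wedge_congr {S : Type*} (wedge vee : S → S → S)
    (wedge_idem : ∀ x : S, wedge x x = x)
    (vee_idem : ∀ x : S, vee x x = x)
    (wedge_assoc : ∀ x y z : S, wedge (wedge x y) z = wedge x (wedge y z))
    (vee_assoc : ∀ x y z : S, vee (vee x y) z = vee x (vee y z))
    (abs₁ : ∀ x y : S, wedge x (vee x y) = x)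
    (abs₂ : ∀ x y : S, wedge (vee y x) x = x)
    (abs₃ : ∀ x y : S, vee x (wedge x y) = x)
    (abs₄ : ∀ x y : S, vee (wedge y x) x = x)
    (b x y z w : S)
    (hxy : wedge (wedge b x) b = wedge (wedge b y) b)
    (hzw : wedge (wedge b z) b = wedge (wedge b w) b) :
    wedge (wedge b (wedge x z)) b = wedge (wedge b (wedge y w)) b := by
  have reg : ∀ a x y : S, wedge a (wedge x (wedge y a)) =
      wedge a (wedge x (wedge a (wedge y a))) := by
    intro a x y
    have k := (skew_K wedge vee wedge_idem wedge_assoc vee_idem vee_assoc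
      abs₁ abs₂ abs₄ a x y).2
    have l := (skew_K (fun p q => wedge q p) (fun p q => vee q p) wedge_idem
      (fun p q r => (wedge_assoc r q p).symm) vee_idem
      (fun p q r => (vee_assoc r q p).symm) abs₂ abs₁ abs₃ a y x).1
    simp only [wedge_assoc] at k l
    exact l.symm.trans k
  have g : ∀ x z : S, wedge (wedge b (wedge x z)) b =
      wedge (wedge (wedge b x) b) (wedge (wedge b z) b) := by
    intro x z
    have bb : ∀ t, wedge b (wedge b t) = wedge b t := fun t => by
      rw [← wedge_assoc, wedge_idem]
    simp only [wedge_assoc, bb]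
    exact reg b x z
  rw [g, g, hxy, hzw]
end

section
/- Let S be a skew lattice and let b, x, y, z, w ∈ S satisfy x D z, y D w, b∧x∧b = b∧y∧b and b∧z∧b = b∧w∧b. Then b∧(x∨z)∧b = b∧(y∨w)∧b. Together with the corresponding ∧-statement, this shows that the coset equivalence determined by an upper D-class on a lower D-class is a congruence of that class. -/
/-- Band fact: `xyx = x` and `xwx = x` give `xywx = x`. -/
lemma band_mid {S : Type*} (m : S → S → S) (idem : ∀ x, m x x = x)
    (assoc : ∀ x y z, m (m x y) z = m x (m y z)) (x y w : S)
    (h1 : m x (m y x) = x) (h2 : m x (m w x) = x) : m x (m y (m w x)) = x := by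
  have e1 : ∀ t, m x (m y (m x t)) = m x t := fun t => by
    rw [← assoc y, ← assoc x, h1]
  have e2 : ∀ t, m x (m w (m x t)) = m x t := fun t => by
    rw [← assoc w, ← assoc x, h2]
  have a : m x (m (m w (m x y)) x) = x := by
    simp only [assoc, h1, h2]
  rw [← idem (m w (m x y))] at a
  simpa only [assoc, h1, h2, e1, e2] using a

/-- If `zez = z` for the first operation then `eze = e` for the second. -/
lemma sl_flip {S : Type*} (m j : S → S → S)
    (jidem : ∀ x, j x x = x)
    (massoc : ∀ x y z, m (m x y) z = m x (m y z))
    (jassoc : ∀ x y z, j (j x y) z = j x (j y z))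
    (abs₃ : ∀ x y, j x (m x y) = x)
    (abs₄ : ∀ x y, j (m y x) x = x) (z e : S)
    (h : m z (m e z) = z) : j e (j z e) = e := by
  have a : j z (m e z) = m e z := by
    have := abs₄ (m e z) z
    rwa [h] at this
  have b : j e (j z (m e z)) = e := by rw [a, abs₃]
  calc j e (j z e) = j e (j z (j e (j z (m e z)))) := by rw [b]
    _ = j (j (j e z) (j e z)) (m e z) := by simp only [jassoc]
    _ = e := by rw [jidem, jassoc, b]

/-- If `e D e'` and `z` lies below them then `e e' z = e z`. -/
lemma sl_left {S : Type*} (m j : S → S → S)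
    (midem : ∀ x, m x x = x) (jidem : ∀ x, j x x = x)
    (massoc : ∀ x y z, m (m x y) z = m x (m y z))
    (jassoc : ∀ x y z, j (j x y) z = j x (j y z))
    (abs₁ : ∀ x y, m x (j x y) = x)
    (abs₂ : ∀ x y, m (j y x) x = x)
    (abs₃ : ∀ x y, j x (m x y) = x)
    (abs₄ : ∀ x y, j (m y x) x = x) (e e' z : S)
    (h1 : m e (m e' e) = e) (hz : m z (m e z) = z) :
    m e (m e' z) = m e z := by
  have f := sl_flip m j jidem massoc jassoc abs₃ abs₄ z e hz
  have f' : ∀ t, j e (j z (j e t)) = j e t := fun t => by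
    rw [← jassoc z, ← jassoc e, f]
  obtain ⟨k, hk⟩ : ∃ k, k = j z (j e z) := ⟨_, rfl⟩
  have kz : m k z = z := by rw [hk, ← jassoc, abs₂]
  have d1 : j k (j e k) = k := by
    rw [hk]; simp only [jassoc, f']
  have d2 : j e (j k e) = e := by
    rw [hk]; simp only [jassoc, f', f]
  have c1 : m e (m k e) = e := sl_flip j m midem jassoc massoc abs₁ abs₂ k e d1
  have c2 : m k (m e k) = k := sl_flip j m midem jassoc massoc abs₁ abs₂ e k d2
  have c3 := band_mid m midem massoc e e' k h1 c1
  have c4 : m e (m e' k) = m e k := by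
    conv_lhs => rw [← c2]
    conv_rhs => rw [← c3]
    simp only [massoc]
  calc m e (m e' z) = m (m e (m e' k)) z := by simp only [massoc, kz]
    _ = m e z := by rw [c4, massoc, kz]

/-- Regularity: `abaca = abca`. -/
lemma sl_regular {S : Type*} (m j : S → S → S)
    (midem : ∀ x, m x x = x) (jidem : ∀ x, j x x = x)
    (massoc : ∀ x y z, m (m x y) z = m x (m y z))
    (jassoc : ∀ x y z, j (j x y) z = j x (j y z))
    (abs₁ : ∀ x y, m x (j x y) = x)
    (abs₂ : ∀ x y, m (j y x) x = x)
    (abs₃ : ∀ x y, j x (m x y) = x)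
    (abs₄ : ∀ x y, j (m y x) x = x) (a b c : S) :
    m a (m b (m c a)) = m a (m b (m a (m c a))) := by
  have i : ∀ x t, m x (m x t) = m x t := fun x t => by rw [← massoc, midem]
  -- idempotence of short words, in right-nested form
  have i2 : ∀ x y t, m x (m y (m x (m y t))) = m x (m y t) := fun x y t => by
    have := i (m x y) t
    simpa only [massoc] using this
  have i2' : ∀ x y, m x (m y (m x y)) = m x y := fun x y => by
    have := midem (m x y)
    simpa only [massoc] using this
  have i3 : ∀ x y w t, m x (m y (m w (m x (m y (m w t))))) = m x (m y (m w t)) :=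
    fun x y w t => by
      have := i (m x (m y w)) t
      simpa only [massoc] using this
  have i3' : ∀ x y w, m x (m y (m w (m x (m y w)))) = m x (m y w) := fun x y w => by
    have := midem (m x (m y w))
    simpa only [massoc] using this
  have L := sl_left m j midem jidem massoc jassoc abs₁ abs₂ abs₃ abs₄
    (m a b) (m b a) (m c (m a (m b (m c a))))
    (by simp only [massoc, i, i2, i2'])
    (by simp only [massoc, i, i2, i2', i3, i3'])
  have R := sl_left (fun x y => m y x) (fun x y => j y x) midem jidem
    (fun x y z => (massoc z y x).symm) (fun x y z => (jassoc z y x).symm)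
    (fun x y => abs₂ x y) (fun x y => abs₁ x y) (fun x y => abs₄ x y) (fun x y => abs₃ x y)
    (m c a) (m a c) (m a (m b (m a (m c (m a b)))))
    (by simp only [massoc, i, i2, i2'])
    (by
      have := midem (m a (m b (m a (m c (m a b)))))
      simp only [massoc, i, i2, i2', i3, i3'] at this ⊢
      exact this)
  simp only [massoc, i, i2, i2', i3, i3'] at L R
  have q := midem (m a (m b (m a (m c a))))
  simp only [massoc, i, i2, i2', i3, i3'] at q
  grind

/-- On a D-class `x ∨ z = z ∧ x`. -/
lemma sl_vee {S : Type*} (m j : S → S → S)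
    (midem : ∀ x, m x x = x) (jidem : ∀ x, j x x = x)
    (massoc : ∀ x y z, m (m x y) z = m x (m y z))
    (jassoc : ∀ x y z, j (j x y) z = j x (j y z))
    (abs₁ : ∀ x y, m x (j x y) = x)
    (abs₂ : ∀ x y, m (j y x) x = x)
    (abs₃ : ∀ x y, j x (m x y) = x)
    (abs₄ : ∀ x y, j (m y x) x = x) (x z : S)
    (h1 : m x (m z x) = x) (h2 : m z (m x z) = z) : j x z = m z x := by
  have f1 := sl_flip m j jidem massoc jassoc abs₃ abs₄ x z h1
  have f2 := sl_flip m j jidem massoc jassoc abs₃ abs₄ z x h2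
  have g1 : m (j x z) (m x (j x z)) = j x z :=
    sl_flip j m midem jassoc massoc abs₁ abs₂ x (j x z)
      (by rw [jassoc, ← jassoc x x, jidem, f2])
  have g2 : m (j x z) (m z (j x z)) = j x z :=
    sl_flip j m midem jassoc massoc abs₁ abs₂ z (j x z)
      (by rw [jassoc, jidem, f1])
  have g3 := band_mid m midem massoc (j x z) z x g2 g1
  rw [abs₁, ← massoc, abs₂] at g3
  exact g3.symm


/-- The coset equivalence is compatible with ∨. -/
theorem coset_equiv_vee_congr {S : Type*} (wedge vee : S → S → S)
    (wedge_idem : ∀ x : S, wedge x x = x)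
    (vee_idem : ∀ x : S, vee x x = x)
    (wedge_assoc : ∀ x y z : S, wedge (wedge x y) z = wedge x (wedge y z))
    (vee_assoc : ∀ x y z : S, vee (vee x y) z = vee x (vee y z))
    (abs₁ : ∀ x y : S, wedge x (vee x y) = x)
    (abs₂ : ∀ x y : S, wedge (vee y x) x = x)
    (abs₃ : ∀ x y : S, vee x (wedge x y) = x)
    (abs₄ : ∀ x y : S, vee (wedge y x) x = x)
    (b x y z w : S)
    (hxz : wedge (wedge x z) x = x ∧ wedge (wedge z x) z = z)
    (hyw : wedge (wedge y w) y = y ∧ wedge (wedge w y) w = w)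
    (hxy : wedge (wedge b x) b = wedge (wedge b y) b)
    (hzw : wedge (wedge b z) b = wedge (wedge b w) b) :
    wedge (wedge b (vee x z)) b = wedge (wedge b (vee y w)) b := by
  have V := sl_vee wedge vee wedge_idem vee_idem wedge_assoc vee_assoc abs₁ abs₂ abs₃ abs₄
  have R := sl_regular wedge vee wedge_idem vee_idem wedge_assoc vee_assoc abs₁ abs₂ abs₃ abs₄
  simp only [wedge_assoc] at hxz hyw hxy hzw ⊢
  rw [V x z hxz.1 hxz.2, V y w hyw.1 hyw.2, wedge_assoc, wedge_assoc, R b z x, R b w y, hxy]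
  calc wedge b (wedge z (wedge b (wedge y b)))
      = wedge (wedge b (wedge z b)) (wedge y b) := by simp only [wedge_assoc]
    _ = wedge b (wedge w (wedge b (wedge y b))) := by rw [hzw]; simp only [wedge_assoc]
end

section
/- Let S be a skew lattice with D-classes A > B, and let y, y' ∈ B. Then the following are equivalent: (i) A∧y∧A = A∧y'∧A (equality of cosets as sets); (ii) for all x ∈ A, x∧y∧x = x∧y'∧x; (iii) there exists x ∈ A such that x∧y∧x = x∧y'∧x. -/
/-- Green's R is a right congruence. -/
theorem skew_aux_R {S : Type*} (m j : S → S → S)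
    (idem : ∀ x, m x x = x)
    (assoc : ∀ x y z, m (m x y) z = m x (m y z))
    (jassoc : ∀ x y z, j (j x y) z = j x (j y z))
    (abs₁ : ∀ x y : S, m x (j x y) = x)
    (abs₂ : ∀ x y : S, m (j y x) x = x)
    (abs₄ : ∀ x y : S, j (m y x) x = x)
    (jidem : ∀ x, j x x = x)
    (x y c : S) (h1 : m x y = y) (h2 : m y x = x) :
    m (m x c) (m y c) = m y c := by
  obtain ⟨d, hd⟩ : ∃ d, d = m c y := ⟨_, rfl⟩
  obtain ⟨w, hw⟩ : ∃ w, w = j y d := ⟨_, rfl⟩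
  have wd : m w d = d := by rw [hw]; exact abs₂ _ _
  have yw : m y w = y := by rw [hw]; exact abs₁ _ _
  have wy' : j w y = y := by rw [hw, jassoc, hd, abs₄, jidem]
  have wy : m w y = w := by
    have := abs₁ w y
    rwa [wy'] at this
  have e1 : m y (m w x) = x := by rw [← assoc, yw, h2]
  have e2 : m x (m w x) = x := by
    calc m x (m w x) = m (m y (m w x)) (m w x) := by rw [e1]
      _ = x := by rw [assoc, idem, e1]
  have e3 : m x w = y := by
    calc m x w = m x (m w (m x y)) := by rw [h1, wy]
      _ = m (m x (m w x)) y := by simp only [assoc]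
      _ = y := by rw [e2, h1]
  have e4 : m x d = m y d := by
    calc m x d = m x (m w d) := by rw [wd]
      _ = m y d := by rw [← assoc, e3]
  calc m (m x c) (m y c) = m (m x d) c := by rw [hd]; simp only [assoc]
    _ = m (m y c) (m y c) := by rw [e4, hd]; simp only [assoc]
    _ = m y c := idem _

/-- Equality of cosets A∧y∧A = A∧y'∧A is equivalent to the pointwise conditions. -/
theorem coset_eq_tfae {S : Type*} (wedge vee : S → S → S)
    (wedge_idem : ∀ x : S, wedge x x = x)
    (vee_idem : ∀ x : S, vee x x = x)
    (wedge_assoc : ∀ x y z : S, wedge (wedge x y) z = wedge x (wedge y z))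
    (vee_assoc : ∀ x y z : S, vee (vee x y) z = vee x (vee y z))
    (abs₁ : ∀ x y : S, wedge x (vee x y) = x)
    (abs₂ : ∀ x y : S, wedge (vee y x) x = x)
    (abs₃ : ∀ x y : S, vee x (wedge x y) = x)
    (abs₄ : ∀ x y : S, vee (wedge y x) x = x)
    (a₀ b₀ : S) (hAB : wedge (wedge b₀ a₀) b₀ = b₀)
    (A : Set S) (hA : A = {x | wedge (wedge x a₀) x = x ∧ wedge (wedge a₀ x) a₀ = a₀})
    (B : Set S) (hB : B = {x | wedge (wedge x b₀) x = x ∧ wedge (wedge b₀ x) b₀ = b₀})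
    (y y' : S) (hy : y ∈ B) (hy' : y' ∈ B) :
    ({z | ∃ a ∈ A, z = wedge (wedge a y) a} = {z | ∃ a ∈ A, z = wedge (wedge a y') a} ↔
        ∀ x ∈ A, wedge (wedge x y) x = wedge (wedge x y') x) ∧
      ((∀ x ∈ A, wedge (wedge x y) x = wedge (wedge x y') x) ↔
        ∃ x ∈ A, wedge (wedge x y) x = wedge (wedge x y') x) := by
  have id2 : ∀ a b, wedge a (wedge a b) = wedge a b := fun a b => by
    rw [← wedge_assoc, wedge_idem]
  have id3 : ∀ a b, wedge a (wedge b (wedge a b)) = wedge a b := fun a b => by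
    rw [← wedge_assoc, wedge_idem]
  have id4 : ∀ a b c, wedge a (wedge b (wedge a (wedge b c))) = wedge a (wedge b c) :=
    fun a b c => by
      have := id2 (wedge a b) c
      simpa only [wedge_assoc] using this
  have reg : ∀ x u v, wedge x (wedge u (wedge x (wedge v x))) = wedge x (wedge u (wedge v x)) := by
    intro x u v
    have hR := skew_aux_R wedge vee wedge_idem wedge_assoc vee_assoc abs₁ abs₂ abs₄ vee_idem
      (wedge x (wedge u x)) (wedge x u) (wedge v x)
      (by simp only [wedge_assoc, id2, id3, id4]) (by simp only [wedge_assoc, id2, id3, id4])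
    have hL := skew_aux_R (fun a b => wedge b a) (fun a b => vee b a) wedge_idem
      (fun a b c => (wedge_assoc c b a).symm) (fun a b c => (vee_assoc c b a).symm)
      (fun a b => abs₂ a b) (fun a b => abs₁ a b) (fun a b => abs₃ a b) vee_idem
      (wedge v x) (wedge x (wedge v x)) (wedge x u)
      (by simp only [wedge_assoc, id2, id3, id4]) (by simp only [wedge_assoc, id2, id3, id4])
    simp only [wedge_assoc] at hR hL
    exact hL.symm.trans hR
  have ha₀ : a₀ ∈ A := by rw [hA]; simp [wedge_idem]
  have hD : ∀ x ∈ A, ∀ x' ∈ A, wedge x (wedge x' x) = x := by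
    intro x hx x' hx'
    rw [hA] at hx hx'
    obtain ⟨p, -⟩ := hx
    obtain ⟨-, q⟩ := hx'
    rw [wedge_assoc] at p q
    have e0 : wedge x (wedge a₀ (wedge x' (wedge a₀ x))) = x := by
      calc wedge x (wedge a₀ (wedge x' (wedge a₀ x)))
          = wedge x (wedge (wedge a₀ (wedge x' a₀)) x) := by simp only [wedge_assoc]
        _ = x := by rw [q, p]
    have e1 : wedge x (wedge a₀ (wedge x' x)) = x := by
      calc wedge x (wedge a₀ (wedge x' x))
          = wedge x (wedge a₀ (wedge x' (wedge x (wedge a₀ x)))) := by rw [p]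
        _ = wedge x (wedge (wedge a₀ x') (wedge x (wedge a₀ x))) := by simp only [wedge_assoc]
        _ = wedge x (wedge (wedge a₀ x') (wedge a₀ x)) := reg _ _ _
        _ = x := by rw [wedge_assoc, e0]
    calc wedge x (wedge x' x)
        = wedge (wedge x (wedge a₀ (wedge x' x))) (wedge x' x) := by rw [e1]
      _ = wedge x (wedge a₀ (wedge (wedge x' x) (wedge x' x))) := by simp only [wedge_assoc]
      _ = x := by rw [wedge_idem, e1]
  have key : ∀ x ∈ A, ∀ x' ∈ A, ∀ t,
      wedge x (wedge (wedge (wedge x' t) x') x) = wedge (wedge x t) x := by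
    intro x hx x' hx' t
    have h := hD x hx x' hx'
    calc wedge x (wedge (wedge (wedge x' t) x') x)
        = wedge x (wedge x' (wedge (wedge t x') x)) := by simp only [wedge_assoc]
      _ = wedge x (wedge x' (wedge x (wedge (wedge t x') x))) := (reg _ _ _).symm
      _ = wedge x (wedge x' (wedge x (wedge t (wedge x' x)))) := by simp only [wedge_assoc]
      _ = wedge x (wedge x' (wedge x (wedge t (wedge x (wedge x' x))))) := by rw [reg x t x']
      _ = wedge (wedge x (wedge x' x)) (wedge t (wedge x (wedge x' x))) := by
        simp only [wedge_assoc]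
      _ = wedge (wedge x t) x := by rw [h, wedge_assoc]
  have h32 : (∃ x ∈ A, wedge (wedge x y) x = wedge (wedge x y') x) →
      ∀ x ∈ A, wedge (wedge x y) x = wedge (wedge x y') x := by
    rintro ⟨x₁, hx₁, h⟩ x hx
    rw [← key x hx x₁ hx₁ y, h, key x hx x₁ hx₁]
  refine ⟨⟨fun h => h32 ?_, fun h => ?_⟩, fun h => ⟨a₀, ha₀, h _ ha₀⟩, h32⟩
  · have : wedge (wedge a₀ y) a₀ ∈ {z | ∃ a ∈ A, z = wedge (wedge a y') a} := by
      rw [← h]; exact ⟨a₀, ha₀, rfl⟩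
    obtain ⟨a, ha, e⟩ := this
    refine ⟨a₀, ha₀, ?_⟩
    rw [← key a₀ ha₀ a₀ ha₀ y, e, key a₀ ha₀ a ha]
  · ext z
    constructor
    · rintro ⟨a, ha, rfl⟩
      exact ⟨a, ha, h a ha⟩
    · rintro ⟨a, ha, rfl⟩
      exact ⟨a, ha, (h a ha).symm⟩
end

section
/- Let S be a skew lattice with D-classes A > B. Then the cosets of A in B partition B: every y ∈ B belongs to its own coset A∧y∧A, and for all y, y' ∈ B, if the cosets A∧y∧A and A∧y'∧A have a common element then they are equal as sets. -/
theorem band_T {S : Type*} (w : S → S → S) (idem : ∀ x, w x x = x)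
    (assoc : ∀ x y z, w (w x y) z = w x (w y z)) (x z v : S)
    (h : w x (w z (w v x)) = x) : w x (w z x) = x := by
  have h1 : w x (w z (w x (w z (w v x)))) = w x (w z (w v x)) := by
    have := congrArg (fun t => w t (w v x)) (idem (w x z))
    simpa only [assoc] using this
  rw [h] at h1
  exact h1

theorem band_U {S : Type*} (w : S → S → S) (idem : ∀ x, w x x = x)
    (assoc : ∀ x y z, w (w x y) z = w x (w y z)) (x u z v : S)
    (h : w x (w u (w z (w v x))) = x) : w x (w z x) = x := by
  have h1 := band_T w idem assoc x (w u z) v (by simpa only [assoc] using h)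
  rw [assoc] at h1
  have h2 : w x (w u (w z (w x (w z x)))) = w x (w u (w z x)) := by
    have := congrArg (fun t => w x (w u t)) (idem (w z x))
    simpa only [assoc] using this
  have h3 : w (w x (w u (w z x))) (w z x) = w x (w u (w z x)) := by
    simpa only [assoc] using h2
  rw [h1] at h3
  exact h3

theorem skew_P {S : Type*} (w v : S → S → S) (videm : ∀ x, v x x = x)
    (vassoc : ∀ x y z, v (v x y) z = v x (v y z))
    (abs₃ : ∀ x y : S, v x (w x y) = x)
    (abs₄ : ∀ x y : S, v (w y x) x = x) (x y : S) (h : w x (w y x) = x) :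
    v y (v x y) = y := by
  have h1 : v x (w y x) = w y x := by
    have := abs₄ (w y x) x
    rwa [h] at this
  apply band_T v videm vassoc y x (w y x)
  rw [← vassoc x, h1, ← vassoc, abs₃, videm]

/-- The cosets of A in B partition B. -/
theorem cosets_partition {S : Type*} (wedge vee : S → S → S)
    (wedge_idem : ∀ x : S, wedge x x = x)
    (vee_idem : ∀ x : S, vee x x = x)
    (wedge_assoc : ∀ x y z : S, wedge (wedge x y) z = wedge x (wedge y z))
    (vee_assoc : ∀ x y z : S, vee (vee x y) z = vee x (vee y z))
    (abs₁ : ∀ x y : S, wedge x (vee x y) = x)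
    (abs₂ : ∀ x y : S, wedge (vee y x) x = x)
    (abs₃ : ∀ x y : S, vee x (wedge x y) = x)
    (abs₄ : ∀ x y : S, vee (wedge y x) x = x)
    (a₀ b₀ : S) (hAB : wedge (wedge b₀ a₀) b₀ = b₀)
    (A : Set S) (hA : A = {x | wedge (wedge x a₀) x = x ∧ wedge (wedge a₀ x) a₀ = a₀})
    (B : Set S) (hB : B = {x | wedge (wedge x b₀) x = x ∧ wedge (wedge b₀ x) b₀ = b₀}) :
    (∀ y ∈ B, y ∈ {z | ∃ a ∈ A, z = wedge (wedge a y) a}) ∧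
      (∀ y ∈ B, ∀ y' ∈ B,
        ({z | ∃ a ∈ A, z = wedge (wedge a y) a} ∩
            {z | ∃ a ∈ A, z = wedge (wedge a y') a}).Nonempty →
          {z | ∃ a ∈ A, z = wedge (wedge a y) a} =
            {z | ∃ a ∈ A, z = wedge (wedge a y') a}) := by
  subst hA hB
  simp only [wedge_assoc] at hAB
  have tr : ∀ x y z, wedge x (wedge y x) = x → wedge y (wedge z y) = y →
      wedge x (wedge z x) = x := by
    intro x y z h1 h2
    apply band_U wedge wedge_idem wedge_assoc x y z y
    have : wedge x (wedge (wedge y (wedge z y)) x) = x := by rw [h2, h1]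
    simpa only [wedge_assoc] using this
  -- every y in B lies below some m in A
  have key : ∀ y, wedge y (wedge b₀ y) = y → ∃ m, wedge m (wedge a₀ m) = m ∧
      wedge a₀ (wedge m a₀) = a₀ ∧ wedge y m = y ∧ wedge m y = y := by
    intro y hy
    have h1 := tr y b₀ a₀ hy hAB
    have h2 := skew_P wedge vee vee_idem vee_assoc abs₃ abs₄ y a₀ h1
    have e : vee a₀ (vee y (vee a₀ y)) = vee a₀ y := by
      have := congrArg (fun t => vee t y) h2
      simpa only [vee_assoc] using this
    refine ⟨vee y (vee a₀ y), ?_, ?_, abs₁ _ _, ?_⟩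
    · apply skew_P vee wedge wedge_idem wedge_assoc abs₁ abs₂
      rw [← vee_assoc a₀, e]
      simp only [vee_assoc]
      exact h2
    · apply skew_P vee wedge wedge_idem wedge_assoc abs₁ abs₂
      simp only [vee_assoc]
      rw [e, e]
    · rw [← vee_assoc]; exact abs₂ _ _
  -- A is a rectangular band
  have rect : ∀ a b c, wedge a (wedge b a) = a → wedge b (wedge c b) = b →
      wedge c (wedge a c) = c → wedge a (wedge b c) = wedge a c := by
    intro a b c hab hbc hca
    have h : wedge a (wedge (wedge b c) a) = a := by
      apply band_T wedge wedge_idem wedge_assoc a _ b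
      have : wedge a (wedge (wedge b (wedge c b)) a) = a := by rw [hbc, hab]
      simpa only [wedge_assoc] using this
    have h' : wedge (wedge a (wedge (wedge b c) a)) c = wedge a c := by rw [h]
    simp only [wedge_assoc] at h'
    rwa [hca] at h'
  have shrink : ∀ y, wedge y (wedge b₀ y) = y → ∀ a c,
      wedge a (wedge a₀ a) = a → wedge a₀ (wedge a a₀) = a₀ →
      wedge c (wedge a₀ c) = c → wedge a₀ (wedge c a₀) = a₀ →
      wedge c (wedge (wedge a (wedge y a)) c) = wedge c (wedge y c) := by
    intro y hy a c ha ha' hc hc'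
    obtain ⟨m, hm, hm', hym, hmy⟩ := key y hy
    have l : wedge c (wedge a y) = wedge c y := by
      have := congrArg (fun t => wedge t y) (rect c a m (tr _ _ _ hc ha') (tr _ _ _ ha hm')
        (tr _ _ _ hm hc'))
      simpa only [wedge_assoc, hmy] using this
    have r : wedge y (wedge a c) = wedge y c := by
      have := congrArg (fun t => wedge y t) (rect m a c (tr _ _ _ hm ha') (tr _ _ _ ha hc')
        (tr _ _ _ hc hm'))
      simpa only [← wedge_assoc, hym] using this
    simp only [wedge_assoc]
    rw [r, ← wedge_assoc a, ← wedge_assoc c, l, wedge_assoc]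
  simp only [wedge_assoc, Set.mem_setOf_eq]
  refine ⟨?_, ?_⟩
  · rintro y ⟨hy, -⟩
    obtain ⟨m, hm, hm', hym, hmy⟩ := key y hy
    exact ⟨m, ⟨hm, hm'⟩, by rw [hym, hmy]⟩
  · rintro y ⟨hy, -⟩ y' ⟨hy', -⟩ ⟨z, ⟨a, ⟨ha, ha'⟩, hz⟩, ⟨c, ⟨hc, hc'⟩, hz'⟩⟩
    have eq : ∀ d, wedge d (wedge a₀ d) = d ∧ wedge a₀ (wedge d a₀) = a₀ →
        wedge d (wedge y d) = wedge d (wedge y' d) := by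
      rintro d ⟨hd, hd'⟩
      rw [← shrink y hy a d ha ha' hd hd', ← shrink y' hy' c d hc hc' hd hd', ← hz, ← hz']
    ext t
    constructor
    · rintro ⟨d, hd, rfl⟩
      exact ⟨d, hd, eq d hd⟩
    · rintro ⟨d, hd, rfl⟩
      exact ⟨d, hd, (eq d hd).symm⟩
end

section
/- Let S be a skew lattice with D-classes A > B, let a ∈ A and b ∈ B. Then there is exactly one element y of the coset A∧b∧A satisfying a∧y = y = y∧a (i.e., y ≤ a in the natural partial order): the image set of a in B is a transversal of the cosets of A in B. -/
/-- If `a L b` and `c` lies below the class of `a`, then `ca = cb`. -/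
theorem sk_aux1 {S : Type*} (w v : S → S → S)
    (wi : ∀ x : S, w x x = x)
    (wa : ∀ x y z : S, w (w x y) z = w x (w y z))
    (va : ∀ x y z : S, v (v x y) z = v x (v y z))
    (abs₁ : ∀ x y : S, w x (v x y) = x)
    (abs₂ : ∀ x y : S, w (v y x) x = x)
    (abs₃ : ∀ x y : S, v x (w x y) = x)
    (abs₄ : ∀ x y : S, v (w y x) x = x)
    (a b c : S) (hab : w a b = a) (hba : w b a = b) (hc : w c (w a c) = c) :
    w c a = w c b := by
  have hp1 : w c (v c a) = c := abs₁ c a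
  have hp2 : w (v c a) a = a := abs₂ a c
  have e1 : v (w c a) c = w c a := by
    have h := abs₃ (w c a) c
    rwa [wa, hc] at h
  have e2 : v (w c a) (v c a) = a := by rw [← va, e1, abs₄]
  have hp3 : w a (v c a) = v c a := by
    have h := abs₂ (v c a) (w c a)
    rwa [e2] at h
  generalize v c a = p at *
  have h1 : w b (w p a) = b := by rw [hp2, hba]
  have h2 : w (w b p) b = b := by
    have h := wi (w b p)
    calc w (w b p) b = w (w b p) (w b (w p a)) := by rw [h1]
      _ = w (w (w b p) (w b p)) a := by simp only [wa]
      _ = b := by rw [h, wa, h1]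
  have h3 : w p b = a := by
    calc w p b = w (w a p) b := by rw [hp3]
      _ = w (w (w a b) p) b := by rw [hab]
      _ = w a (w (w b p) b) := by simp only [wa]
      _ = a := by rw [h2, hab]
  rw [← h3, ← wa, hp1]

/-- `L` is a left congruence. -/
theorem sk_aux2 {S : Type*} (w v : S → S → S)
    (wi : ∀ x : S, w x x = x)
    (wa : ∀ x y z : S, w (w x y) z = w x (w y z))
    (va : ∀ x y z : S, v (v x y) z = v x (v y z))
    (abs₁ : ∀ x y : S, w x (v x y) = x)
    (abs₂ : ∀ x y : S, w (v y x) x = x)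
    (abs₃ : ∀ x y : S, v x (w x y) = x)
    (abs₄ : ∀ x y : S, v (w y x) x = x)
    (a b c : S) (hab : w a b = a) (hba : w b a = b) :
    w (w c a) (w c b) = w c a := by
  have hca := wi (w c a)
  have hk : w (w (w c a) c) (w a (w (w c a) c)) = w (w c a) c := by
    calc _ = w (w (w c a) (w c a)) (w (w c a) c) := by simp only [wa]
      _ = _ := by rw [hca, ← wa, hca]
  have h := sk_aux1 w v wi wa va abs₁ abs₂ abs₃ abs₄ a b _ hab hba hk
  calc w (w c a) (w c b) = w (w (w c a) c) b := by simp only [wa]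
    _ = w (w (w c a) c) a := h.symm
    _ = w c a := by rw [wa, hca]

/-- Regularity of the meet. -/
theorem sk_regular {S : Type*} (w v : S → S → S)
    (wi : ∀ x : S, w x x = x)
    (wa : ∀ x y z : S, w (w x y) z = w x (w y z))
    (va : ∀ x y z : S, v (v x y) z = v x (v y z))
    (abs₁ : ∀ x y : S, w x (v x y) = x)
    (abs₂ : ∀ x y : S, w (v y x) x = x)
    (abs₃ : ∀ x y : S, v x (w x y) = x)
    (abs₄ : ∀ x y : S, v (w y x) x = x)
    (x p q : S) (hp : w x p = p) (hq : w q x = q) :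
    w (w p x) q = w p q := by
  have q1 : w q (w x q) = q := by rw [← wa, hq, wi]
  have q2 : w (w x q) q = w x q := by rw [wa, wi]
  have p1 : w (w p x) p = p := by rw [wa, hp, wi]
  have p2 : w p (w p x) = w p x := by rw [← wa, wi]
  have h1 := sk_aux2 w v wi wa va abs₁ abs₂ abs₃ abs₄ (w x q) q p q2 q1
  have h2 := sk_aux2 (fun s t => w t s) (fun s t => v t s) wi
    (fun s t r => (wa r t s).symm) (fun s t r => (va r t s).symm)
    (fun s t => abs₂ s t) (fun s t => abs₁ s t) (fun s t => abs₄ s t) (fun s t => abs₃ s t)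
    p (w p x) q p1 p2
  rw [← wa p x q] at h1
  exact h1.symm.trans h2

/-- The image set of a in B is a transversal of the cosets of A in B: each coset
contains exactly one element below a. -/
theorem imageSet_transversal {S : Type*} (wedge vee : S → S → S)
    (wedge_idem : ∀ x : S, wedge x x = x)
    (vee_idem : ∀ x : S, vee x x = x)
    (wedge_assoc : ∀ x y z : S, wedge (wedge x y) z = wedge x (wedge y z))
    (vee_assoc : ∀ x y z : S, vee (vee x y) z = vee x (vee y z))
    (abs₁ : ∀ x y : S, wedge x (vee x y) = x)
    (abs₂ : ∀ x y : S, wedge (vee y x) x = x)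
    (abs₃ : ∀ x y : S, vee x (wedge x y) = x)
    (abs₄ : ∀ x y : S, vee (wedge y x) x = x)
    (a₀ b₀ : S) (hAB : wedge (wedge b₀ a₀) b₀ = b₀)
    (A : Set S) (hA : A = {x | wedge (wedge x a₀) x = x ∧ wedge (wedge a₀ x) a₀ = a₀})
    (B : Set S) (hB : B = {x | wedge (wedge x b₀) x = x ∧ wedge (wedge b₀ x) b₀ = b₀})
    (a : S) (ha : a ∈ A) (b : S) (hb : b ∈ B) :
    ∃! y : S, y ∈ {z | ∃ a' ∈ A, z = wedge (wedge a' b) a'} ∧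
      wedge a y = y ∧ wedge y a = y := by
  have reg : ∀ x p q, wedge x p = p → wedge q x = q →
      wedge (wedge p x) q = wedge p q := fun x p q h1 h2 =>
    sk_regular wedge vee wedge_idem wedge_assoc vee_assoc abs₁ abs₂ abs₃ abs₄ x p q h1 h2
  have conj : ∀ x u t, wedge (wedge x u) x = x →
      wedge (wedge x (wedge (wedge u t) u)) x = wedge (wedge x t) x := by
    intro x u t hx
    have r1 := reg x (wedge x u) (wedge (wedge t u) x)
      (by rw [← wedge_assoc, wedge_idem]) (by rw [wedge_assoc, wedge_idem])
    have r2 := reg x (wedge x t) (wedge u x)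
      (by rw [← wedge_assoc, wedge_idem]) (by rw [wedge_assoc, wedge_idem])
    calc wedge (wedge x (wedge (wedge u t) u)) x
        = wedge (wedge x u) (wedge (wedge t u) x) := by simp only [wedge_assoc]
      _ = wedge (wedge (wedge x u) x) (wedge (wedge t u) x) := r1.symm
      _ = wedge (wedge x t) (wedge u x) := by rw [hx]; simp only [wedge_assoc]
      _ = wedge (wedge (wedge x t) x) (wedge u x) := r2.symm
      _ = wedge (wedge x t) (wedge (wedge x u) x) := by simp only [wedge_assoc]
      _ = wedge (wedge x t) x := by rw [hx]
  have ha2 := ha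
  rw [hA] at ha2
  refine ⟨wedge (wedge a b) a, ⟨⟨a, ha, rfl⟩, ?_, ?_⟩, ?_⟩
  · rw [← wedge_assoc, ← wedge_assoc, wedge_idem]
  · rw [wedge_assoc, wedge_idem]
  · rintro y ⟨⟨a', ha', hy⟩, h1, h2⟩
    rw [hA] at ha'
    have haa : wedge (wedge a a') a = a := by
      have h := conj a a₀ a' ha2.1
      rw [ha'.2, ha2.1] at h
      exact h.symm
    have h := conj a a' b haa
    rw [← hy, h1, h2] at h
    exact h
end

section
/- Let S be a skew lattice with D-classes A > B, let a ∈ A and b ∈ B. Then the map φ defined by φ(x) = x∧b∧x is a bijection from the coset B∨a∨B onto the coset A∧b∧A (in Lean: Set.BijOn of the map x ↦ x∧b∧x on the set B∨a∨B with image A∧b∧A). -/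
/-- Skew lattice axioms bundled, to exploit the two dualities. -/
structure SkL {S : Type*} (w v : S → S → S) : Prop where
  wi : ∀ x, w x x = x
  vi : ∀ x, v x x = x
  wa : ∀ x y z, w (w x y) z = w x (w y z)
  va : ∀ x y z, v (v x y) z = v x (v y z)
  a1 : ∀ x y, w x (v x y) = x
  a2 : ∀ x y, w (v y x) x = x
  a3 : ∀ x y, v x (w x y) = x
  a4 : ∀ x y, v (w y x) x = x

namespace SkL

variable {S : Type*} {w v : S → S → S}

theorem swap (h : SkL w v) : SkL v w :=
  ⟨h.vi, h.wi, h.va, h.wa, h.a3, h.a4, h.a1, h.a2⟩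

theorem flip (h : SkL w v) : SkL (fun x y => w y x) (fun x y => v y x) :=
  ⟨h.wi, h.vi, fun x y z => (h.wa z y x).symm, fun x y z => (h.va z y x).symm,
    h.a2, h.a1, h.a4, h.a3⟩

theorem wi' (h : SkL w v) (x z : S) : w x (w x z) = w x z := by
  rw [← h.wa, h.wi]

/-- Transitivity of the natural quasiorder. -/
theorem tr (h : SkL w v) {x y z : S} (h1 : w x (w y x) = x) (h2 : w y (w z y) = y) :
    w x (w z x) = x := by
  have e1 : w x (w y (w z (w y x))) = x := by
    have : w y (w z (w y x)) = w y x := by rw [← h.wa z, ← h.wa y, h2]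
    rw [this, h1]
  have e2 : w x (w z (w y x)) = x := by
    have i : w (w z (w y x)) (w z (w y x)) = w z (w y x) := h.wi _
    calc w x (w z (w y x)) = w (w x (w y (w z (w y x)))) (w z (w y x)) := by rw [e1]
      _ = w x (w y (w (w z (w y x)) (w z (w y x)))) := by simp only [h.wa]
      _ = x := by rw [i, e1]
  calc w x (w z x) = w x (w z (w x (w z (w y x)))) := by rw [e2]
    _ = w (w (w x z) (w x z)) (w y x) := by simp only [h.wa]
    _ = w x (w z (w y x)) := by rw [h.wi, h.wa]
    _ = x := e2

/-- The quasiorder expressed with the join. -/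
theorem dual (h : SkL w v) {x y : S} (h1 : w x (w y x) = x) : v y (v x y) = y := by
  have e1 : v x (w y x) = w y x := by
    have := h.a4 (w y x) x
    rwa [h1] at this
  have e2 : v y (v x (w y x)) = y := by rw [e1, h.a3]
  calc v y (v x y) = v y (v x (v y (v x (w y x)))) := by rw [e2]
    _ = v (v (v y x) (v y x)) (w y x) := by simp only [h.va]
    _ = y := by rw [h.vi, h.va, e2]

/-- In a D-class, join is the reversed meet. -/
theorem rect (h : SkL w v) {x y : S} (h1 : w x (w y x) = x) (h2 : w y (w x y) = y) :
    v x y = w y x := by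
  have j : v x (v y x) = x := h.dual h2
  have s1 : w (v x y) (w x (v x y)) = v x y := by
    apply h.swap.dual
    rw [h.va x y x, j, h.vi]
  have s2 : w x (w (w y x) x) = x := by rw [h.wa, h.wi, h1]
  have s3 := h.tr s1 s2
  have s4 : w (w y x) (v x y) = w y x := by rw [h.wa, h.a1]
  have s5 : w (v x y) (w y x) = w y x := by rw [← h.wa, h.a2]
  rw [s4, s5] at s3
  exact s3.symm

theorem left (h : SkL w v) {x e b : S} (h1 : w e x = x) (h2 : w x e = e)
    (hb : w b (w x b) = b) : w e b = w x b := by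
  have hb' : v x (v b x) = x := h.dual hb
  have ex : v e x = e := by
    have := h.a3 e x
    rwa [h1] at this
  have ez : v e (v x b) = v e b := by rw [← h.va, ex]
  have yx : w (v x b) (w x (v x b)) = v x b := by
    apply h.swap.dual
    rw [h.va x b x, hb', h.vi]
  have xy : w x (w (v x b) x) = x := by rw [← h.wa, h.a1, h.wi]
  have exx : w e (w x e) = e := by rw [h2, h.wi]
  have xex : w x (w e x) = x := by rw [h1, h.wi]
  have r := h.rect (h.tr exx xy) (h.tr yx xex)
  rw [ez] at r
  have q : w (v e b) b = b := h.a2 _ _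
  rw [r] at q
  calc w e b = w (w x e) b := by rw [h2]
    _ = w (w (w x (v x b)) e) b := by rw [h.a1]
    _ = w x (w (w (v x b) e) b) := by simp only [h.wa]
    _ = w x b := by rw [q]

theorem left' (h : SkL w v) {x y b : S} (h1 : w x (w y x) = x)
    (hb : w b (w x b) = b) : w x (w y b) = w x b := by
  rw [← h.wa]
  exact h.left (by rw [h.wa, h1]) (by rw [h.wi']) hb

theorem reg (h : SkL w v) {x y b : S} (h1 : w x (w y x) = x)
    (hb : w b (w x b) = b) : w x (w y (w b (w y x))) = w x (w b x) := by
  have r : w (w b y) x = w b x :=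
    h.flip.left' (x := x) (y := y) (b := b) (by simpa only [h.wa] using h1)
      (by simpa only [h.wa] using hb)
  calc w x (w y (w b (w y x))) = w (w x (w y b)) (w y x) := by simp only [h.wa]
    _ = w x (w (w b y) x) := by rw [h.left' h1 hb]; simp only [h.wa]
    _ = w x (w b x) := by rw [r]

end SkL

/-- The coset bijection x ↦ x∧b∧x maps the coset B∨a∨B bijectively onto the coset
A∧b∧A. -/
theorem coset_bijection {S : Type*} (wedge vee : S → S → S)
    (wedge_idem : ∀ x : S, wedge x x = x)
    (vee_idem : ∀ x : S, vee x x = x)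
    (wedge_assoc : ∀ x y z : S, wedge (wedge x y) z = wedge x (wedge y z))
    (vee_assoc : ∀ x y z : S, vee (vee x y) z = vee x (vee y z))
    (abs₁ : ∀ x y : S, wedge x (vee x y) = x)
    (abs₂ : ∀ x y : S, wedge (vee y x) x = x)
    (abs₃ : ∀ x y : S, vee x (wedge x y) = x)
    (abs₄ : ∀ x y : S, vee (wedge y x) x = x)
    (a₀ b₀ : S) (hAB : wedge (wedge b₀ a₀) b₀ = b₀)
    (A : Set S) (hA : A = {x | wedge (wedge x a₀) x = x ∧ wedge (wedge a₀ x) a₀ = a₀})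
    (B : Set S) (hB : B = {x | wedge (wedge x b₀) x = x ∧ wedge (wedge b₀ x) b₀ = b₀})
    (a : S) (ha : a ∈ A) (b : S) (hb : b ∈ B) :
    Set.BijOn (fun x => wedge (wedge x b) x)
      {z | ∃ b' ∈ B, z = vee (vee b' a) b'}
      {z | ∃ a' ∈ A, z = wedge (wedge a' b) a'} := by
  have h : SkL wedge vee :=
    ⟨wedge_idem, vee_idem, wedge_assoc, vee_assoc, abs₁, abs₂, abs₃, abs₄⟩
  subst hA hB
  simp only [wedge_assoc, vee_assoc, Set.mem_ofPred_eq] at hAB ha hb ⊢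
  obtain ⟨ha1, ha2⟩ := ha
  obtain ⟨hb1, hb2⟩ := hb
  have below : ∀ x y, wedge x (wedge a₀ x) = x → wedge a₀ (wedge x a₀) = a₀ →
      wedge y (wedge b₀ y) = y → wedge y (wedge x y) = y := fun x y _ h2 h3 =>
    h.tr h3 (h.tr hAB h2)
  -- elements of the coset of B in A lie in A
  have inA : ∀ y, wedge y (wedge b₀ y) = y →
      wedge (vee y (vee a y)) (wedge a₀ (vee y (vee a y))) = vee y (vee a y) ∧
      wedge a₀ (wedge (vee y (vee a y)) a₀) = a₀ := by
    intro y hy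
    have d : vee a (vee y a) = a := h.dual (below a y ha1 ha2 hy)
    have d' : ∀ z, vee a (vee y (vee a z)) = vee a z := by
      intro z
      rw [← vee_assoc y, ← vee_assoc a, d]
    constructor
    · refine h.tr (h.swap.dual ?_) ha1
      simp only [vee_assoc, d', d]
    · refine h.tr ha2 (h.swap.dual ?_)
      simp only [vee_assoc, d', d]
  have inB : ∀ x, wedge x (wedge a₀ x) = x → wedge a₀ (wedge x a₀) = a₀ →
      wedge (wedge x (wedge b x)) (wedge b₀ (wedge x (wedge b x))) = wedge x (wedge b x) ∧
      wedge b₀ (wedge (wedge x (wedge b x)) b₀) = b₀ := by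
    intro x h1 h2
    have d : wedge b (wedge x b) = b := below x b h1 h2 hb1
    have d' : ∀ z, wedge b (wedge x (wedge b z)) = wedge b z := by
      intro z
      rw [← wedge_assoc x, ← wedge_assoc b, d]
    constructor
    · refine h.tr ?_ hb1
      simp only [wedge_assoc, d']
    · refine h.tr hb2 ?_
      simp only [wedge_assoc, d', d]
  refine ⟨?_, ?_, ?_⟩
  · rintro _ ⟨y, ⟨hy1, hy2⟩, rfl⟩
    exact ⟨_, inA y hy1, rfl⟩
  · -- every x in the coset is recovered from its image c as c ∨ a ∨ c
    have key : ∀ y, wedge y (wedge b₀ y) = y → wedge b₀ (wedge y b₀) = b₀ →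
        ∀ x, x = vee y (vee a y) →
        x = vee (wedge x (wedge b x)) (vee a (wedge x (wedge b x))) := by
      intro y hy1 hy2 x hx
      obtain ⟨hx1, hx2⟩ := inA y hy1
      rw [← hx] at hx1 hx2
      obtain ⟨hc1, hc2⟩ := inB x hx1 hx2
      have cx : vee (wedge x (wedge b x)) x = x := by
        rw [← wedge_assoc, abs₄]
      have xc : vee x (wedge x (wedge b x)) = x := abs₃ _ _
      generalize wedge x (wedge b x) = c at *
      have r := h.swap.reg (x := c) (y := y) (b := a)
        (h.dual (h.tr hy1 hc2)) (h.dual (below a c ha1 ha2 hc1))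
      rw [← r]
      calc x = vee c (vee x c) := by rw [xc, cx]
        _ = _ := by rw [hx]; simp only [vee_assoc]
    rintro x ⟨y, ⟨hy1, hy2⟩, hx⟩ x' ⟨y', ⟨hy1', hy2'⟩, hx'⟩ hxx
    have hxx' : wedge x (wedge b x) = wedge x' (wedge b x') := hxx
    have k := key y hy1 hy2 x hx
    rw [hxx', ← key y' hy1' hy2' x' hx'] at k
    exact k
  · rintro _ ⟨a', ⟨h1, h2⟩, rfl⟩
    obtain ⟨hc1, hc2⟩ := inB a' h1 h2
    obtain ⟨hx1, hx2⟩ := inA _ hc1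
    refine ⟨_, ⟨_, ⟨hc1, hc2⟩, rfl⟩, ?_⟩
    have r := h.reg (h.tr hx1 h2) (below _ b hx1 hx2 hb1)
    have cx := abs₁ (wedge a' (wedge b a')) (vee a (wedge a' (wedge b a')))
    have xc := abs₂ (wedge a' (wedge b a')) (vee (wedge a' (wedge b a')) a)
    rw [vee_assoc] at xc
    generalize vee (wedge a' (wedge b a')) (vee a (wedge a' (wedge b a'))) = x at *
    show wedge x (wedge b x) = _
    rw [← r]
    simp only [wedge_assoc] at cx
    rw [cx, xc]
end

section
/- Let S be a skew lattice with D-classes A > B and let a ∈ A. Then the image set of a in B equals the set of elements of B lying below a in the natural partial order: {a∧b∧a : b ∈ B} = {y ∈ B : a∧y = y = y∧a}. -/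
/-- The image set of a in B is exactly the set of elements of B below a. -/
theorem imageSet_eq_below {S : Type*} (wedge vee : S → S → S)
    (wedge_idem : ∀ x : S, wedge x x = x)
    (vee_idem : ∀ x : S, vee x x = x)
    (wedge_assoc : ∀ x y z : S, wedge (wedge x y) z = wedge x (wedge y z))
    (vee_assoc : ∀ x y z : S, vee (vee x y) z = vee x (vee y z))
    (abs₁ : ∀ x y : S, wedge x (vee x y) = x)
    (abs₂ : ∀ x y : S, wedge (vee y x) x = x)
    (abs₃ : ∀ x y : S, vee x (wedge x y) = x)
    (abs₄ : ∀ x y : S, vee (wedge y x) x = x)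
    (a₀ b₀ : S) (hAB : wedge (wedge b₀ a₀) b₀ = b₀)
    (A : Set S) (hA : A = {x | wedge (wedge x a₀) x = x ∧ wedge (wedge a₀ x) a₀ = a₀})
    (B : Set S) (hB : B = {x | wedge (wedge x b₀) x = x ∧ wedge (wedge b₀ x) b₀ = b₀})
    (a : S) (ha : a ∈ A) :
    {z | ∃ b ∈ B, z = wedge (wedge a b) a} = {y | y ∈ B ∧ wedge a y = y ∧ wedge y a = y} := by
  have trans : ∀ x y z : S, wedge x (wedge y x) = x → wedge y (wedge z y) = y →
      wedge x (wedge z x) = x := by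
    intro x y z hxy hyz
    have hl : ∀ g e : S, x = wedge g e → wedge x e = x := by
      intro g e h
      rw [h, wedge_assoc, wedge_idem]
    have hr : ∀ h r : S, x = wedge h r → wedge h x = x := by
      intro h r e
      rw [e, ← wedge_assoc, wedge_idem]
    have h1 : x = wedge (wedge x y) (wedge z (wedge y x)) := by
      conv_lhs => rw [← hxy, ← hyz]
      simp only [wedge_assoc]
    have h2 := hl _ _ h1
    have h3 : x = wedge (wedge x z) (wedge y x) := by
      rw [wedge_assoc]; exact h2.symm
    have h4 := hr _ _ h3
    rwa [wedge_assoc] at h4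
  subst hA hB
  simp only [Set.mem_ofPred_eq, wedge_assoc] at hAB ha ⊢
  ext z
  simp only [Set.mem_ofPred_eq]
  constructor
  · rintro ⟨b, ⟨hb1, hb2⟩, rfl⟩
    have hba : wedge b (wedge a b) = b :=
      trans _ _ _ hb1 (trans _ _ _ hAB ha.2)
    have hz : wedge (wedge a (wedge b a)) (wedge b (wedge a (wedge b a)))
        = wedge a (wedge b a) := by
      rw [← wedge_assoc b a (wedge b a), wedge_idem,
        wedge_assoc a, wedge_idem]
    have hbz : wedge b (wedge (wedge a (wedge b a)) b) = b := by
      simp only [wedge_assoc]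
      rw [hba, hba]
    have h1 := trans _ _ _ hz hb1
    have h2 := trans _ _ _ hb2 hbz
    refine ⟨⟨h1, h2⟩, ?_, ?_⟩
    · rw [← wedge_assoc a a, wedge_idem]
    · rw [wedge_assoc, wedge_assoc, wedge_idem]
  · rintro ⟨hz, h1, h2⟩
    exact ⟨z, hz, by rw [h2, h1]⟩
end

section
/- Let S be a skew lattice and let b, c ∈ S satisfy b∧c = c = c∧b (i.e., c ≤ b in the natural partial order). Then for every e ∈ S, (e∧b∧e)∧c∧(e∧b∧e) = e∧c∧e. Consequently, for a > b > c the composite of the coset bijections φ_{a,b} and φ_{b,c} is a restriction of the coset bijection φ_{a,c}. -/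
/-- Duality of the natural preorder. -/
theorem skew_dual {S : Type*} (w v : S → S → S)
    (wi : ∀ x : S, w x x = x)
    (vi : ∀ x : S, v x x = x)
    (wa : ∀ x y z : S, w (w x y) z = w x (w y z))
    (va : ∀ x y z : S, v (v x y) z = v x (v y z))
    (abs₁ : ∀ x y : S, w x (v x y) = x)
    (abs₂ : ∀ x y : S, w (v y x) x = x)
    (abs₃ : ∀ x y : S, v x (w x y) = x)
    (abs₄ : ∀ x y : S, v (w y x) x = x)
    (x y : S) (h : w x (w y x) = x) : v y (v x y) = y := by
  have e1 : v (w y x) x = x := abs₄ _ _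
  have e2 : v x (w x y) = x := abs₃ _ _
  have e3 : v (w x y) x = w x y := by
    have := abs₃ (w x y) x
    rwa [wa, h] at this
  have e4 : v x (w y x) = w y x := by
    have := abs₄ (w y x) x
    rwa [h] at this
  have e5 : v (w y x) (w x y) = x := by
    have h1 : v (v (w y x) (w x y)) x = v (w y x) (w x y) := by rw [va, e3]
    have h2 : v x (v (w y x) (w x y)) = v (w y x) (w x y) := by rw [← va, e4]
    have h3 := vi (v x (v (w y x) (w x y)))
    have h4 := vi (v (w y x) (w x y))
    have h5 := vi (v (w x y) (w y x))
    have h6 : v (w y x) (v (w x y) (w y x)) = w y x := by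
      have := abs₃ (w y x) (w x y)
      grind
    have h7 : v (w y x) (v (w x y) x) = v (w y x) (w x y) := by rw [e3]
    grind
  have e6 : v y (w y x) = y := abs₃ _ _
  have e7 : v (w x y) y = y := abs₄ _ _
  grind

/-- Left multiplication respects Green's relation L. -/
theorem skew_L {S : Type*} (w v : S → S → S)
    (wi : ∀ x : S, w x x = x)
    (vi : ∀ x : S, v x x = x)
    (wa : ∀ x y z : S, w (w x y) z = w x (w y z))
    (va : ∀ x y z : S, v (v x y) z = v x (v y z))
    (abs₁ : ∀ x y : S, w x (v x y) = x)
    (abs₂ : ∀ x y : S, w (v y x) x = x)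
    (abs₃ : ∀ x y : S, v x (w x y) = x)
    (abs₄ : ∀ x y : S, v (w y x) x = x)
    (a b c : S) (hab : w a b = a) (hba : w b a = b) :
    w c (w a (w c b)) = w c a := by
  obtain ⟨k, hk⟩ : ∃ k, k = w c (w a c) := ⟨_, rfl⟩
  have hk1 : w k (w a k) = k := by
    have := wi (w c a)
    have := wi c
    grind
  have d1 : v a (v k a) = a := skew_dual w v wi vi wa va abs₁ abs₂ abs₃ abs₄ k a hk1
  obtain ⟨r, hr⟩ : ∃ r, r = v k (v a k) := ⟨_, rfl⟩
  have hkr : w k r = k := by rw [hr]; exact abs₁ _ _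
  have d2 : v a (v r a) = a := by
    grind
  have d3 : v r (v a r) = r := by
    have := vi k
    grind
  have m1 : w r (w a r) = r := skew_dual v w vi wi va wa abs₃ abs₄ abs₁ abs₂ a r d2
  have m2 : w a (w r a) = a := skew_dual v w vi wi va wa abs₃ abs₄ abs₁ abs₂ r a d3
  have m3 : w b (w r b) = b := by
    have h1 : w b (w r a) = b := by
      calc w b (w r a) = w (w b a) (w r a) := by rw [hba]
        _ = b := by rw [wa, m2, hba]
    have h2 : w (w b r) (w (w b r) a) = w (w b r) a := by rw [← wa, wi]
    have h3 : w (w b r) a = b := by rw [wa, h1]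
    rw [h3, wa] at h2
    exact h2
  have m4 : w r b = w r a := by
    have h1 : w a (w r b) = a := by
      calc w a (w r b) = w a (w b (w r b)) := by rw [← wa a b, hab]
        _ = a := by rw [m3, hab]
    calc w r b = w (w r (w a r)) b := by rw [m1]
      _ = w r (w a (w r b)) := by rw [wa, wa]
      _ = w r a := by rw [h1]
  calc w c (w a (w c b)) = w k b := by rw [hk, wa, wa]
    _ = w k (w r b) := by rw [← wa, hkr]
    _ = w k a := by rw [m4, ← wa, hkr]
    _ = w c a := by rw [hk, ← wa, wa, wi]

/-- The meet reduct is a regular band. -/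
theorem skew_regular {S : Type*} (w v : S → S → S)
    (wi : ∀ x : S, w x x = x)
    (vi : ∀ x : S, v x x = x)
    (wa : ∀ x y z : S, w (w x y) z = w x (w y z))
    (va : ∀ x y z : S, v (v x y) z = v x (v y z))
    (abs₁ : ∀ x y : S, w x (v x y) = x)
    (abs₂ : ∀ x y : S, w (v y x) x = x)
    (abs₃ : ∀ x y : S, v x (w x y) = x)
    (abs₄ : ∀ x y : S, v (w y x) x = x)
    (x y z : S) : w x (w y (w x (w z x))) = w x (w y (w z x)) := by
  have l := skew_L w v wi vi wa va abs₁ abs₂ abs₃ abs₄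
  have r := skew_L (fun x y => w y x) (fun x y => v y x) wi vi (fun x y z => (wa z y x).symm) (fun x y z => (va z y x).symm) abs₂ abs₁ abs₄ abs₃
  have hx := wi x
  have h1 := wi (w z x)
  have h2 := wi (w x y)
  have l1 := l (w x (w z x)) (w z x) (w x y) (by grind) (by grind)
  have r1 := r (w x y) (w x (w y x)) (w z x) (by grind) (by grind)
  grind



/-- If c ≤ b then (e∧b∧e)∧c∧(e∧b∧e) = e∧c∧e; hence composites of coset bijections
restrict coset bijections. -/
theorem coset_bijection_compose {S : Type*} (wedge vee : S → S → S)
    (wedge_idem : ∀ x : S, wedge x x = x)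
    (vee_idem : ∀ x : S, vee x x = x)
    (wedge_assoc : ∀ x y z : S, wedge (wedge x y) z = wedge x (wedge y z))
    (vee_assoc : ∀ x y z : S, vee (vee x y) z = vee x (vee y z))
    (abs₁ : ∀ x y : S, wedge x (vee x y) = x)
    (abs₂ : ∀ x y : S, wedge (vee y x) x = x)
    (abs₃ : ∀ x y : S, vee x (wedge x y) = x)
    (abs₄ : ∀ x y : S, vee (wedge y x) x = x)
    (b c : S) (hbc : wedge b c = c) (hcb : wedge c b = c) :
    ∀ e : S,
      wedge (wedge (wedge (wedge e b) e) c) (wedge (wedge e b) e) = wedge (wedge e c) e := by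
  intro e
  have reg := skew_regular wedge vee wedge_idem vee_idem wedge_assoc vee_assoc abs₁ abs₂ abs₃ abs₄
  have h1 := reg e b c
  have h2 := reg e c b
  simp only [wedge_assoc]
  calc wedge e (wedge b (wedge e (wedge c (wedge e (wedge b e)))))
      = wedge e (wedge b (wedge e (wedge c (wedge b e)))) := by rw [h2]
    _ = wedge e (wedge b (wedge e (wedge c e))) := by rw [← wedge_assoc c b e, hcb]
    _ = wedge e (wedge b (wedge c e)) := h1
    _ = wedge e (wedge c e) := by rw [← wedge_assoc b c e, hbc]
end

section
/- Let S be a skew lattice. Then S is normal, i.e. x∧y∧z∧w = x∧z∧y∧w for all x, y, z, w ∈ S, if and only if for every pair of comparable D-classes A > B (given by a₀, b₀ with b₀∧a₀∧b₀ = b₀) and all y, y' ∈ B, the cosets A∧y∧A and A∧y'∧A are equal; that is, B is the entire coset of A in B. -/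
section Band
variable {S : Type*} [Semigroup S]

theorem band_idem2 (id : ∀ x : S, x * x = x) (x y : S) : x * (x * y) = x * y := by
  rw [← mul_assoc, id]

/-- In a band, an element of the ideal of `b` is below `b` in the Green preorder. -/
theorem band_ideal (id : ∀ x : S, x * x = x) {a b p q : S} (h : a = p * b * q) :
    a * b * a = a := by
  obtain ⟨f, hf⟩ : ∃ f, f = b * q * p * b := ⟨_, rfl⟩
  have hbf : b * f = f := by rw [hf]; simp only [← mul_assoc, id]
  have hfb : f * b = f := by rw [hf]; simp only [mul_assoc, id]
  have haf : a = p * f * q := by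
    have := id a
    rw [h] at this
    rw [h, ← this, hf]; simp only [mul_assoc]
  have hfqpf : f * q * (p * f) = f := by
    have h1 := id (b * q * p * b)
    have h2 : f * q * (p * f) = (f * b) * q * (p * (b * f)) := by rw [hbf, hfb]
    have h3 : (f * b) * q * (p * (b * f)) = f * ((b * q * p * b) * f) := by
      simp only [mul_assoc]
    rw [h2, h3, ← hf, id, id]
  have h1 : f * q * f = f := by
    calc f * q * f = f * q * (f * q * (p * f)) := by rw [hfqpf]
      _ = (f * q) * (f * q) * (p * f) := by simp only [mul_assoc]
      _ = f := by rw [id, hfqpf]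
  have h2 : f * p * f = f := by
    calc f * p * f = f * q * (p * f) * (p * f) := by rw [hfqpf, mul_assoc]
      _ = f * q * ((p * f) * (p * f)) := by simp only [mul_assoc]
      _ = f := by rw [id, hfqpf]
  have h3 : a * f * a = a := by
    calc a * f * a = p * ((f * q * f) * p * f) * q := by rw [haf]; simp only [mul_assoc]
      _ = a := by rw [h1, h2, haf]
  have h4 : a * b * (f * a) = a := by
    rw [← mul_assoc, mul_assoc a b f, hbf, h3]
  calc a * b * a = a * b * (a * b * (f * a)) := by rw [h4]
    _ = (a * b) * (a * b) * (f * a) := by simp only [mul_assoc]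
    _ = a := by rw [id, h4]

theorem band_meet (id : ∀ x : S, x * x = x) {a b c : S} (hb : a * b * a = a)
    (hc : a * c * a = a) : a * (b * c) * a = a := by
  have h1 : a * (c * a * b) * a = a := by
    calc a * (c * a * b) * a = (a * c * a) * b * a := by simp only [mul_assoc]
      _ = a := by rw [hc, hb]
  have h2 : a = (a * c * a) * (b * c) * (a * b * a) := by
    calc a = a * ((c * a * b) * (c * a * b)) * a := by rw [id, h1]
      _ = _ := by simp only [mul_assoc]
  exact band_ideal id h2

theorem band_normal (id : ∀ x : S, x * x = x)
    (loc : ∀ e b c : S, e * b = b → b * e = b → e * c = c → c * e = c →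
      b * c * b = b → c * b * c = c → b = c) (x y z w : S) :
    x * y * z * w = x * z * y * w := by
  have key : ∀ x y z w : S, x * y * z * w * x * (x * z * y * w * x) * (x * y * z * w * x)
      = x * y * z * w * x := by
    intro x y z w
    have hx : x * y * z * w * x * x * (x * y * z * w * x) = x * y * z * w * x :=
      band_ideal id (p := x * y * z * w) (q := x) (by simp only [mul_assoc, id])
    have hy : x * y * z * w * x * y * (x * y * z * w * x) = x * y * z * w * x :=
      band_ideal id (p := x) (q := z * w * x) (by simp only [mul_assoc])
    have hz : x * y * z * w * x * z * (x * y * z * w * x) = x * y * z * w * x :=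
      band_ideal id (p := x * y) (q := w * x) (by simp only [mul_assoc])
    have hw : x * y * z * w * x * w * (x * y * z * w * x) = x * y * z * w * x :=
      band_ideal id (p := x * y * z) (q := x) (by simp only [mul_assoc])
    exact band_meet id (band_meet id (band_meet id (band_meet id hx hz) hy) hw) hx
  have comm : ∀ x y z w : S, x * y * z * w * x = x * z * y * w * x := by
    intro x y z w
    refine loc x _ _ ?_ ?_ ?_ ?_ (key x y z w) (key x z y w) <;>
      simp only [mul_assoc, id, band_idem2 id]
  have comm' : w * x * y * z * w = w * x * z * y * w := by
    have key : ∀ y z : S, w * x * y * z * w * (w * x * z * y * w) * (w * x * y * z * w)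
      = w * x * y * z * w := by
      intro y z
      have hx : w * x * y * z * w * x * (w * x * y * z * w) = w * x * y * z * w :=
        band_ideal id (p := w) (q := y * z * w) (by simp only [mul_assoc])
      have hy : w * x * y * z * w * y * (w * x * y * z * w) = w * x * y * z * w :=
        band_ideal id (p := w * x) (q := z * w) (by simp only [mul_assoc])
      have hz : w * x * y * z * w * z * (w * x * y * z * w) = w * x * y * z * w :=
        band_ideal id (p := w * x * y) (q := w) (by simp only [mul_assoc])
      have hw : w * x * y * z * w * w * (w * x * y * z * w) = w * x * y * z * w :=
        band_ideal id (p := w * x * y * z) (q := w) (by simp only [mul_assoc, id])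
      exact band_meet id (band_meet id (band_meet id (band_meet id hw hx) hz) hy) hw
    refine loc w _ _ ?_ ?_ ?_ ?_ (key y z) (key z y) <;>
      simp only [mul_assoc, id, band_idem2 id]
  calc x * y * z * w = (x * y * z * w * x) * (y * z * w) := by
        have := id (x * y * z * w); simp only [mul_assoc] at this ⊢; exact this.symm
    _ = x * z * y * (w * x * y * z * w) := by rw [comm]; simp only [mul_assoc]
    _ = (x * z * y * w) * (x * z * y * w) := by rw [comm']; simp only [mul_assoc]
    _ = _ := id _

/-- The backward direction: single cosets imply normality. -/
theorem band_back (id : ∀ x : S, x * x = x)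
    (H : ∀ a₀ b₀ : S, b₀ * a₀ * b₀ = b₀ → ∀ y ∈ {x | x * b₀ * x = x ∧ b₀ * x * b₀ = b₀},
          ∀ y' ∈ {x | x * b₀ * x = x ∧ b₀ * x * b₀ = b₀},
            {z | ∃ a ∈ {x | x * a₀ * x = x ∧ a₀ * x * a₀ = a₀}, z = a * y * a} =
              {z | ∃ a ∈ {x | x * a₀ * x = x ∧ a₀ * x * a₀ = a₀}, z = a * y' * a})
    (x y z w : S) : x * y * z * w = x * z * y * w := by
  refine band_normal id ?_ x y z w
  intro e b c heb hbe hec hce hbc hcb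
  have h := H e b (by rw [hbe, id]) b ⟨by rw [id, id], by rw [id, id]⟩ c ⟨hcb, hbc⟩
  have hc : c ∈ {z | ∃ a ∈ {x | x * e * x = x ∧ e * x * e = e}, z = a * b * a} := by
    rw [h]
    exact ⟨e, ⟨by rw [id, id], by rw [id, id]⟩, by rw [hec, hce]⟩
  obtain ⟨a, ⟨_, ha⟩, hca⟩ := hc
  symm
  calc c = e * (a * b * a) * e := by rw [← hca, hec, hce]
    _ = e * (a * (e * b * e) * a) * e := by rw [heb, hbe]
    _ = (e * a * e) * b * (e * a * e) := by simp only [mul_assoc]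
    _ = b := by rw [ha, heb, hbe]

/-- Normality makes `z` the element of its class under `a`. -/
theorem band_fwd (id : ∀ x : S, x * x = x)
    (N : ∀ x y z w : S, x * y * z * w = x * z * y * w) {a y z : S}
    (hza : z * a = z) (haz : a * z = z) (h1 : y * z * y = y) (h2 : z * y * z = z) :
    z = a * y * a := by
  have e1 : a * z * y * a = z := by
    calc a * z * y * a = a * z * z * y * a := by simp only [mul_assoc, band_idem2 id]
      _ = a * (z * y * z) * a := by
          rw [mul_assoc a z z, id, ← mul_assoc, ← mul_assoc]
          have := N (a * z) y z a
          rw [this]; simp only [mul_assoc, band_idem2 id]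
      _ = z := by rw [h2, haz, hza]
  have e2 : a * z * y * a = a * y * a := by
    calc a * z * y * a = a * y * z * a := N a z y a
      _ = a * y * y * z * a := by simp only [mul_assoc, band_idem2 id]
      _ = a * y * z * y * a := by rw [N (a * y) y z a]
      _ = a * (y * z * y) * a := by simp only [mul_assoc]
      _ = a * y * a := by rw [h1]
  rw [← e2, e1]

end Band

theorem skew_dual_s16 {S : Type*} (wedge vee : S → S → S)
    (vee_idem : ∀ x : S, vee x x = x)
    (wedge_assoc : ∀ x y z : S, wedge (wedge x y) z = wedge x (wedge y z))
    (vee_assoc : ∀ x y z : S, vee (vee x y) z = vee x (vee y z))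
    (abs₃ : ∀ x y : S, vee x (wedge x y) = x)
    (abs₄ : ∀ x y : S, vee (wedge y x) x = x) {a b : S}
    (h : wedge (wedge b a) b = b) : vee (vee a b) a = a := by
  have h1 : vee b (wedge a b) = wedge a b := by
    have := abs₄ (wedge a b) b
    rwa [← wedge_assoc, h] at this
  have h2 : vee (vee a b) (wedge a b) = a := by rw [vee_assoc, h1, abs₃]
  calc vee (vee a b) a = vee (vee a b) (vee (vee a b) (wedge a b)) := by rw [h2]
    _ = a := by rw [← vee_assoc, vee_idem, h2]

/-- A skew lattice is normal iff each lower D-class is a single coset of any upper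
D-class. -/
theorem normal_iff_single_coset {S : Type*} (wedge vee : S → S → S)
    (wedge_idem : ∀ x : S, wedge x x = x)
    (vee_idem : ∀ x : S, vee x x = x)
    (wedge_assoc : ∀ x y z : S, wedge (wedge x y) z = wedge x (wedge y z))
    (vee_assoc : ∀ x y z : S, vee (vee x y) z = vee x (vee y z))
    (abs₁ : ∀ x y : S, wedge x (vee x y) = x)
    (abs₂ : ∀ x y : S, wedge (vee y x) x = x)
    (abs₃ : ∀ x y : S, vee x (wedge x y) = x)
    (abs₄ : ∀ x y : S, vee (wedge y x) x = x) :
    (∀ x y z w : S, wedge (wedge (wedge x y) z) w = wedge (wedge (wedge x z) y) w) ↔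
      (∀ a₀ b₀ : S, wedge (wedge b₀ a₀) b₀ = b₀ →
        ∀ y ∈ {x | wedge (wedge x b₀) x = x ∧ wedge (wedge b₀ x) b₀ = b₀},
          ∀ y' ∈ {x | wedge (wedge x b₀) x = x ∧ wedge (wedge b₀ x) b₀ = b₀},
            {z | ∃ a ∈ {x | wedge (wedge x a₀) x = x ∧ wedge (wedge a₀ x) a₀ = a₀},
                z = wedge (wedge a y) a} =
              {z | ∃ a ∈ {x | wedge (wedge x a₀) x = x ∧ wedge (wedge a₀ x) a₀ = a₀},
                z = wedge (wedge a y') a}) := by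
  constructor
  · intro N
    letI : Semigroup S := { mul := wedge, mul_assoc := wedge_assoc }
    have main : ∀ a₀ b₀ : S, wedge (wedge b₀ a₀) b₀ = b₀ →
        ∀ y ∈ {x | wedge (wedge x b₀) x = x ∧ wedge (wedge b₀ x) b₀ = b₀},
          ∀ y' ∈ {x | wedge (wedge x b₀) x = x ∧ wedge (wedge b₀ x) b₀ = b₀},
            {z | ∃ a ∈ {x | wedge (wedge x a₀) x = x ∧ wedge (wedge a₀ x) a₀ = a₀},
                z = wedge (wedge a y) a} ⊆
              {z | ∃ a ∈ {x | wedge (wedge x a₀) x = x ∧ wedge (wedge a₀ x) a₀ = a₀},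
                z = wedge (wedge a y') a} := by
      rintro a₀ b₀ hab y ⟨hy1, hy2⟩ y' ⟨hy1', hy2'⟩ z ⟨c, ⟨hc1, hc2⟩, hz⟩
      have id : ∀ x : S, x * x = x := wedge_idem
      change b₀ * a₀ * b₀ = b₀ at hab
      change y * b₀ * y = y at hy1
      change b₀ * y * b₀ = b₀ at hy2
      change y' * b₀ * y' = y' at hy1'
      change b₀ * y' * b₀ = b₀ at hy2'
      change c * a₀ * c = c at hc1
      change a₀ * c * a₀ = a₀ at hc2
      change z = c * y * c at hz
      -- transitivity of the Green preorder
      have tr : ∀ {p q r : S}, p * q * p = p → q * r * q = q → p * r * p = p := by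
        intro p q r h1 h2
        refine band_ideal id (p := p * q) (q := q * p) ?_
        calc p = p * (q * r * q) * p := by rw [h2, h1]
          _ = _ := by simp only [mul_assoc]
      have hyc : y * c * y = y := tr (tr hy1 hab) hc2
      have hyy : y * y * y = y := by rw [id, id]
      have hzy : z * y * z = z := band_ideal id hz
      have hyz : y * z * y = y := by
        rw [hz]; exact band_meet id (band_meet id hyc hyy) hyc
      have hza0 : z * a₀ * z = z := tr hzy (tr hy1 hab)
      have hzy' : z * y' * z = z := tr hzy (tr hy1 hy2')
      have hyz' : y' * z * y' = y' := tr (tr hy1' hy2) hyz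
      have hv : vee (vee a₀ z) a₀ = a₀ :=
        skew_dual_s16 wedge vee vee_idem wedge_assoc vee_assoc abs₃ abs₄ hza0
      have hv' := hv
      rw [vee_assoc] at hv'
      refine ⟨vee (vee z a₀) z, ⟨?_, ?_⟩, ?_⟩
      · refine skew_dual_s16 vee wedge wedge_idem vee_assoc wedge_assoc abs₁ abs₂ ?_
        simp only [← vee_assoc]
        rw [hv, hv]
      · refine skew_dual_s16 vee wedge wedge_idem vee_assoc wedge_assoc abs₁ abs₂ ?_
        calc _ = vee (vee z (vee (vee (vee (vee a₀ z) a₀) z) a₀)) z := by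
              simp only [vee_assoc]
          _ = _ := by rw [hv, hv]
      · refine band_fwd id N ?_ ?_ hyz' hzy'
        · change wedge z (vee (vee z a₀) z) = z
          rw [vee_assoc, abs₁]
        · change wedge (vee (vee z a₀) z) z = z
          rw [abs₂]
    intro a₀ b₀ hab y hy y' hy'
    exact Set.Subset.antisymm (main a₀ b₀ hab y hy y' hy') (main a₀ b₀ hab y' hy' y hy)
  · intro H
    letI : Semigroup S := { mul := wedge, mul_assoc := wedge_assoc }
    exact band_back (S := S) wedge_idem H
end

section
/- Let R be a (not necessarily commutative) ring and let S ⊆ R be a set of idempotents (e*e = e for all e ∈ S) that is closed under multiplication and under the operation x∘y = x + y - x*y. Then (S, *, ∘) is a skew lattice: for all x, y, z ∈ S both operations are idempotent (x*x = x, x∘x = x), associative (which for * and ∘ restricted to S follows from ring associativity: (x*y)*z = x*(y*z) and (x∘y)∘z = x∘(y∘z)), and the absorption laws x*(x∘y) = x, (y∘x)*x = x, x∘(x*y) = x, (y*x)∘x = x hold. -/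
/-- The circle operation x∘y = x + y - x*y. -/
def ringCirc {R : Type*} [Ring R] (x y : R) : R := x + y - x * y

/-- A set of idempotents in a ring closed under * and ∘ forms a skew lattice. -/
theorem idempotents_skewLattice {R : Type*} [Ring R] (S : Set R)
    (hidem : ∀ e ∈ S, e * e = e)
    (hmul : ∀ x ∈ S, ∀ y ∈ S, x * y ∈ S)
    (hcirc : ∀ x ∈ S, ∀ y ∈ S, ringCirc x y ∈ S) :
    ∀ x ∈ S, ∀ y ∈ S, ∀ z ∈ S,
      x * x = x ∧
      ringCirc x x = x ∧
      (x * y) * z = x * (y * z) ∧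
      ringCirc (ringCirc x y) z = ringCirc x (ringCirc y z) ∧
      x * ringCirc x y = x ∧
      ringCirc y x * x = x ∧
      ringCirc x (x * y) = x ∧
      ringCirc (y * x) x = x := by
  intro x hx y hy z hz
  have h := hidem x hx
  have h1 : x * (x * y) = x * y := by rw [← mul_assoc, h]
  have h2 : y * x * x = y * x := by rw [mul_assoc, h]
  refine ⟨h, ?_, mul_assoc x y z, ?_, ?_, ?_, ?_, ?_⟩ <;> unfold ringCirc
  · rw [h]; abel
  · noncomm_ring
  · rw [mul_sub, mul_add, h, h1]; abel
  · rw [sub_mul, add_mul, h, h2]; abel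
  · rw [h1]; abel
  · rw [h2]; abel
end
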